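/- arXiv:0806.4394 — 7 statements merged into one kernel-verified Lean document; each statement's English description precedes it below -/
import Mathlib

section
/- Let K be a field of characteristic zero, R a commutative K-algebra, and N₀ an n×n matrix over R. Suppose there exist pairwise distinct elements ξ_1, …, ξ_m ∈ K and positive integers n_1, …, n_m such that ∏_{k=1}^m (N₀ − ξ_k·I)^{n_k} = 0 in Mat_n(R), and suppose that for all k, l the difference ξ_l − ξ_k ∈ K is not a nonzero rational integer (i.e. ξ_l − ξ_k ≠ i·1_K for every nonzero integer i). Then for every integer i ≥ 1 the R-linear map Mat_n(R) → Mat_n(R), Y ↦ i·Y + N₀·Y − Y·N₀, is bijective. -/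
open Polynomial

/-!
`Y ↦ i Y + N₀ Y - Y N₀` is the difference of two commuting operators, left multiplication by
`N₀ + i` and right multiplication by `N₀`. If `p` annihilates `N₀`, then these operators are
annihilated by `p (X - i)` and `p (X)` respectively, and the hypothesis on the roots makes these
two polynomials coprime. A difference `a - b` of commuting elements annihilated by coprime
polynomials `p` and `q` is invertible: it divides `p(a) - p(b) = -p(b)`, and `p(b)` is a unit by
a Bézout relation between `p` and `q` evaluated at `b`.
-/

section Semiring

variable {R A : Type*} [CommSemiring R] [Semiring A] [Algebra R A]

theorem isUnit_aeval_of_isCoprime_of_aeval_eq_zero {a : A} {p q : R[X]} (hpq : IsCoprime p q)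
    (hq : aeval a q = 0) : IsUnit (aeval a p) := by
  obtain ⟨u, v, huv⟩ := hpq
  have bezout : aeval a u * aeval a p = 1 := by simpa [hq] using congrArg (aeval a) huv
  have bezout' : aeval a p * aeval a u = 1 := by rw [← map_mul, mul_comm, map_mul, bezout]
  exact ⟨⟨_, _, bezout', bezout⟩, rfl⟩

theorem aeval_mulLeft (a : A) (p : R[X]) :
    aeval (LinearMap.mulLeft R a) p = LinearMap.mulLeft R (aeval a p) :=
  aeval_algHom_apply (Algebra.lmul R A) a p

theorem aeval_mulRight (a : A) (p : R[X]) :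
    aeval (LinearMap.mulRight R a) p = LinearMap.mulRight R (aeval a p) := by
  -- Right multiplication by `a` is the scalar action of `op a`.
  have h := aeval_algHom_apply (Algebra.lsmul R R A) (MulOpposite.op a) p
  rwa [aeval_op_apply] at h

end Semiring

section CommutingDifference

variable {R A : Type*} [CommRing R]

theorem isUnit_sub_of_isCoprime_of_aeval_eq_zero [CommRing A] [Algebra R A] {a b : A} {p q : R[X]}
    (hpq : IsCoprime p q) (hp : aeval a p = 0) (hq : aeval b q = 0) : IsUnit (a - b) := by
  have hdvd : a - b ∣ aeval a p - aeval b p := by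
    simpa only [eval_map_algebraMap] using sub_dvd_eval_sub a b (p.map (algebraMap R A))
  rw [hp, zero_sub, dvd_neg] at hdvd
  exact isUnit_of_dvd_unit hdvd (isUnit_aeval_of_isCoprime_of_aeval_eq_zero hpq hq)

open scoped IsMulCommutative in
theorem isUnit_sub_of_commute_of_isCoprime_of_aeval_eq_zero [Ring A] [Algebra R A] {a b : A}
    (hab : Commute a b) {p q : R[X]} (hpq : IsCoprime p q) (hp : aeval a p = 0)
    (hq : aeval b q = 0) : IsUnit (a - b) := by
  have hcomm : ∀ x ∈ ({a, b} : Set A), ∀ y ∈ ({a, b} : Set A), x * y = y * x := by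
    rintro x (rfl | rfl) y (rfl | rfl)
    exacts [rfl, hab, hab.symm, rfl]
  let S := Algebra.adjoin R ({a, b} : Set A)
  have : IsMulCommutative S := Algebra.isMulCommutative_adjoin R hcomm
  let a' : S := ⟨a, Algebra.subset_adjoin (Set.mem_insert a {b})⟩
  let b' : S := ⟨b, Algebra.subset_adjoin (Set.mem_insert_of_mem a rfl)⟩
  have hp' : aeval a' p = 0 := Subtype.ext ((aeval_algHom_apply S.val a' p).symm.trans hp)
  have hq' : aeval b' q = 0 := Subtype.ext ((aeval_algHom_apply S.val b' q).symm.trans hq)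
  exact (isUnit_sub_of_isCoprime_of_aeval_eq_zero hpq hp' hq').map S.val

theorem bijective_mul_sub_mul_of_isCoprime [Ring A] [Algebra R A] {a b : A} {p q : R[X]}
    (hpq : IsCoprime p q) (hp : aeval a p = 0) (hq : aeval b q = 0) :
    Function.Bijective (fun y : A => a * y - y * b) := by
  have hunit : IsUnit (LinearMap.mulLeft R a - LinearMap.mulRight R b) :=
    isUnit_sub_of_commute_of_isCoprime_of_aeval_eq_zero (LinearMap.commute_mulLeft_right a b) hpq
      (by rw [aeval_mulLeft, hp, LinearMap.mulLeft_zero_eq_zero])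
      (by rw [aeval_mulRight, hq, LinearMap.mulRight_zero_eq_zero])
  exact (Module.End.isUnit_iff _).mp hunit

end CommutingDifference

section Shift

variable {R : Type*} [CommRing R]

theorem aeval_algebraMap_add_taylor_neg {A : Type*} [Ring A] [Algebra R A] (a : A) (c : R)
    (p : R[X]) : aeval (algebraMap R A c + a) (taylor (-c) p) = aeval a p := by
  simp [taylor_apply, aeval_comp]

theorem taylor_neg_prod_X_sub_C_pow {ι : Type*} (s : Finset ι) (x : ι → R) (e : ι → ℕ) (c : R) :
    taylor (-c) (∏ k ∈ s, (X - C (x k)) ^ e k) = ∏ k ∈ s, (X - C (x k + c)) ^ e k := by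
  simp only [taylor_apply, prod_comp, pow_comp, sub_comp, X_comp, C_comp, C_neg, C_add,
    ← sub_eq_add_neg, sub_add_eq_sub_sub_swap]

theorem isCoprime_prod_X_sub_C_pow {ι κ : Type*} {s : Finset ι} {t : Finset κ} {x : ι → R}
    {y : κ → R} (d : ι → ℕ) (e : κ → ℕ) (h : ∀ k ∈ s, ∀ l ∈ t, IsUnit (x k - y l)) :
    IsCoprime (∏ k ∈ s, (X - C (x k)) ^ d k) (∏ l ∈ t, (X - C (y l)) ^ e l) :=
  IsCoprime.prod_left fun k hk => IsCoprime.prod_right fun l hl =>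
    (isCoprime_X_sub_C_of_isUnit_sub (h k hk l hl)).pow

end Shift

theorem stmt0_general {R A ι : Type*} [CommRing R] [Ring A] [Algebra R A] [Fintype ι]
    (a : A) (ξ : ι → R) (e : ι → ℕ) (hann : aeval a (∏ k, (X - C (ξ k)) ^ e k) = 0)
    (c : R) (hc : ∀ k l, IsUnit (ξ l - ξ k - c)) :
    Function.Bijective (fun y : A => c • y + a * y - y * a) := by
  have hcoprime : IsCoprime (taylor (-c) (∏ k, (X - C (ξ k)) ^ e k))
      (∏ k, (X - C (ξ k)) ^ e k) := by
    rw [taylor_neg_prod_X_sub_C_pow]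
    refine (isCoprime_prod_X_sub_C_pow e e fun l _ k _ => ?_).symm
    simpa only [sub_add_eq_sub_sub] using hc k l
  have hshift := (aeval_algebraMap_add_taylor_neg a c _).trans hann
  simpa only [add_mul, ← Algebra.smul_def] using
    bijective_mul_sub_mul_of_isCoprime hcoprime hshift hann

/-- **Key algebraic step in Lemma 3.2.8 (claim 1).**
Let `K` be a field of characteristic zero, `R` a commutative `K`-algebra and `N₀` an
`n × n` matrix over `R`.  If `N₀` is annihilated by `∏ k, (X - ξ k)^(nk k)` where the
`ξ k ∈ K` are pairwise distinct and no difference `ξ l - ξ k` is a nonzero rational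
integer, then for every integer `i ≥ 1` the map `Y ↦ i • Y + N₀ * Y - Y * N₀` is a
bijection of `Mat_n(R)`. -/
theorem stmt0 (K : Type*) [Field K] [CharZero K] (R : Type*) [CommRing R] [Algebra K R]
    (n m : ℕ) (N₀ : Matrix (Fin n) (Fin n) R) (ξ : Fin m → K) (nk : Fin m → ℕ)
    (hnk : ∀ k, 1 ≤ nk k)
    (hdist : Function.Injective ξ)
    (hann : Polynomial.aeval N₀
      (∏ k : Fin m, (Polynomial.X - Polynomial.C (algebraMap K R (ξ k))) ^ nk k) = 0)
    (hNID : ∀ k l : Fin m, ∀ i : ℤ, i ≠ 0 → ξ l - ξ k ≠ (i : K)) :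
    ∀ i : ℕ, 1 ≤ i →
      Function.Bijective (fun Y : Matrix (Fin n) (Fin n) R =>
        (i : R) • Y + N₀ * Y - Y * N₀) := by
  refine fun i hi => stmt0_general N₀ (algebraMap K R ∘ ξ) nk hann i fun k l => ?_
  have hne : ξ l - ξ k - i ≠ 0 := sub_ne_zero.mpr (mod_cast hNID k l i (by lia))
  simpa using hne.isUnit.map (algebraMap K R)
end

section
/- Let K be a field of characteristic zero, complete with respect to a nonarchimedean absolute value ‖·‖ with ‖p·1_K‖ < 1 for some prime number p. Let α ∈ K be such that α ≠ s·1_K for every natural number s, and assume α has positive type, i.e. there exists ρ ∈ (0,1] such that sup_{s∈ℕ} ρ^s·‖α − s‖^{−1} < ∞. Then there exists ρ' > 0 such that sup_{s∈ℕ} ρ'^s · ‖∏_{i=1}^s (i − α)‖^{−1} < ∞; in other words, the power series ∑_{s≥0} X^s / ∏_{i=1}^s (i − α) has positive radius of convergence. -/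
/-!
Computing the `s`-th finite difference of `x ↦ x⁻¹` at `-α` in two ways gives
`s! / ∏_{i=0}^s (i - α) = ∑_{i=0}^s (-1)^i (s choose i) / (i - α)`, the coefficientwise form of
the Dwork–Gerotto–Sullivan identity. The ultrametric inequality bounds the right-hand side by the
largest `‖i - α‖⁻¹` with `i ≤ s`, hence by `B ρ^{-s}` when `α` has positive type.
In characteristic zero `‖s!‖` decays at most geometrically, by Legendre's formula in residue
characteristic `p`, and dividing by it gives the claim. In positive characteristic `s!` vanishes for
large `s`, but then the `i - α` take finitely many values and their norms are bounded below.
-/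

open Finset Function
open scoped Nat

section FiniteDifferences

theorem norm_fwdDiff_iter_le_of_forall_le {M G : Type*} [AddCommMonoid M]
    [SeminormedAddCommGroup G] [IsUltrametricDist G] {f : M → G} {h y : M} {n : ℕ} {C : ℝ}
    (hf : ∀ k ≤ n, ‖f (y + k • h)‖ ≤ C) : ‖(fwdDiff h)^[n] f y‖ ≤ C := by
  have hC : 0 ≤ C := (norm_nonneg _).trans (hf 0 n.zero_le)
  rw [fwdDiff_iter_eq_sum_shift]
  refine IsUltrametricDist.norm_sum_le_of_forall_le_of_nonneg hC fun k hk ↦ ?_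
  exact (IsUltrametricDist.norm_zsmul_le _ _).trans (hf k (mem_range_succ_iff.1 hk))

theorem fwdDiff_iter_inv {K : Type*} [Field K] {x : K} {n : ℕ}
    (hx : ∀ i ≤ n, x + (i : K) ≠ 0) :
    (fwdDiff 1)^[n] (·⁻¹) x = (-1) ^ n * (n ! : K) / ∏ i ∈ range (n + 1), (x + (i : K)) := by
  induction n generalizing x with
  | zero => simp
  | succ n ih =>
    have shift (i : ℕ) : x + 1 + (i : K) = x + ((i + 1 : ℕ) : K) := by push_cast; ring
    have hx_shift : ∀ i ≤ n, x + 1 + (i : K) ≠ 0 := fun i hi ↦ shift i ▸ hx (i + 1) (by lia)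
    have hx_zero : x ≠ 0 := by simpa using hx 0 (by lia)
    have hx_last : x + ((n + 1 : ℕ) : K) ≠ 0 := hx (n + 1) le_rfl
    set P := ∏ i ∈ range n, (x + ((i + 1 : ℕ) : K))
    have hP : P ≠ 0 := prod_ne_zero_iff.2 fun i hi ↦ hx (i + 1) (by grind)
    have prod_first : ∏ i ∈ range (n + 1), (x + (i : K)) = P * x := by
      rw [prod_range_succ', Nat.cast_zero, add_zero]
    have prod_last : ∏ i ∈ range (n + 1), (x + 1 + (i : K)) = P * (x + ((n + 1 : ℕ) : K)) := by
      simp only [shift, prod_range_succ, P]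
    rw [iterate_succ_apply', fwdDiff, ih hx_shift, ih fun i hi ↦ hx i (by lia),
      prod_range_succ _ (n + 1), prod_first, prod_last, Nat.factorial_succ]
    push_cast at hx_last ⊢
    field_simp
    ring

theorem norm_factorial_mul_inv_norm_prod_le {K : Type*} [NormedField K] [IsUltrametricDist K]
    {x : K} {n : ℕ} {C : ℝ} (hx : ∀ i ≤ n, x + (i : K) ≠ 0)
    (hC : ∀ i ≤ n, ‖x + (i : K)‖⁻¹ ≤ C) :
    ‖(n ! : K)‖ * ‖∏ i ∈ range (n + 1), (x + (i : K))‖⁻¹ ≤ C := by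
  have h : ‖(fwdDiff 1)^[n] (·⁻¹) x‖ ≤ C :=
    norm_fwdDiff_iter_le_of_forall_le fun k hk ↦ by simpa using hC k hk
  simpa [fwdDiff_iter_inv hx, div_eq_mul_inv] using h

end FiniteDifferences

section NormNatCast

theorem exists_prime_norm_natCast_lt_one {K : Type*} [NormedDivisionRing K] {n : ℕ} (hn : n ≠ 0)
    (h : ‖(n : K)‖ < 1) : ∃ p : ℕ, p.Prime ∧ ‖(p : K)‖ < 1 := by
  contrapose! h
  induction n using induction_on_primes with
  | zero => exact absurd rfl hn
  | one => simp
  | prime_mul p n hp ih =>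
    rw [Nat.cast_mul, norm_mul]
    exact one_le_mul_of_one_le_of_one_le (h p hp) (ih (right_ne_zero_of_mul hn))

theorem norm_natCast_eq_one_of_coprime {K : Type*} [NormedField K] [IsUltrametricDist K]
    {m p : ℕ} (hmp : m.Coprime p) (hp : ‖(p : K)‖ < 1) : ‖(m : K)‖ = 1 := by
  refine (IsUltrametricDist.norm_natCast_le_one K m).antisymm ?_
  obtain ⟨a, b, hab⟩ := Nat.isCoprime_iff_coprime.2 hmp
  have bezout : (a : K) * m + b * p = 1 := mod_cast congrArg (Int.cast : ℤ → K) hab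
  have ha : ‖(a : K) * m‖ ≤ ‖(m : K)‖ := by
    rw [norm_mul]
    exact mul_le_of_le_one_left (norm_nonneg _) (IsUltrametricDist.norm_intCast_le_one K a)
  have hb : ‖(b : K) * p‖ < 1 := by
    rw [norm_mul]
    exact mul_lt_one_of_nonneg_of_lt_one_right (IsUltrametricDist.norm_intCast_le_one K b)
      (norm_nonneg _) hp
  have hmax : 1 ≤ max ‖(a : K) * m‖ ‖(b : K) * p‖ := by
    simpa [bezout] using IsUltrametricDist.norm_add_le_max ((a : K) * m) (b * p)
  exact ((le_max_iff.1 hmax).resolve_right hb.not_ge).trans ha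

theorem norm_natCast_eq_pow_padicValNat {K : Type*} [NormedField K] [IsUltrametricDist K] {p n : ℕ}
    [hp : Fact p.Prime] (hpK : ‖(p : K)‖ < 1) (hn : n ≠ 0) :
    ‖(n : K)‖ = ‖(p : K)‖ ^ padicValNat p n := by
  obtain ⟨m, hm⟩ := pow_padicValNat_dvd (p := p) (n := n)
  have hpm : ¬p ∣ m := fun ⟨k, hk⟩ ↦
    pow_succ_padicValNat_not_dvd (p := p) hn ⟨k, by rw [pow_succ, mul_assoc, ← hk]; exact hm⟩
  have hm_norm : ‖(m : K)‖ = 1 :=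
    norm_natCast_eq_one_of_coprime ((hp.out.coprime_iff_not_dvd.2 hpm).symm) hpK
  conv_lhs => rw [hm]
  rw [Nat.cast_mul, Nat.cast_pow, norm_mul, norm_pow, hm_norm, mul_one]

theorem exists_pow_le_norm_factorial (K : Type*) [NormedField K] [IsUltrametricDist K]
    [CharZero K] : ∃ c : ℝ, 0 < c ∧ ∀ n : ℕ, c ^ n ≤ ‖(n ! : K)‖ := by
  by_cases h : ∃ p : ℕ, p.Prime ∧ ‖(p : K)‖ < 1
  · obtain ⟨p, hp, hpK⟩ := h
    have := Fact.mk hp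
    refine ⟨‖(p : K)‖, norm_pos_iff.2 (Nat.cast_ne_zero.2 hp.ne_zero), fun n ↦ ?_⟩
    rw [norm_natCast_eq_pow_padicValNat hpK n.factorial_ne_zero]
    exact pow_le_pow_of_le_one (norm_nonneg _) hpK.le (padicValNat_factorial_le p n)
  · refine ⟨1, one_pos, fun n ↦ ?_⟩
    rw [one_pow]
    exact not_lt.1 fun hn ↦ h (exists_prime_norm_natCast_lt_one n.factorial_ne_zero hn)

theorem exists_pos_forall_le_norm_natCast_sub {R : Type*} [NormedRing R] (p : ℕ) [NeZero p]
    [CharP R p] {α : R} (hα : ∀ s : ℕ, α ≠ (s : R)) :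
    ∃ δ : ℝ, 0 < δ ∧ ∀ s : ℕ, δ ≤ ‖(s : R) - α‖ := by
  obtain ⟨i, -, hi⟩ := (range p).exists_min_image (fun s : ℕ ↦ ‖(s : R) - α‖)
    (nonempty_range_iff.2 (NeZero.ne p))
  refine ⟨‖(i : R) - α‖, norm_sub_pos_iff.2 (hα i).symm, fun s ↦ ?_⟩
  rw [CharP.natCast_eq_natCast_mod R p s]
  exact hi _ (mem_range.2 (s.mod_lt (NeZero.pos p)))

end NormNatCast

section PositiveType

variable {K : Type*} [NormedField K]

/-- An element `α` has *positive type* if its distance to `s : ℕ` decays at most geometrically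
in `s`, that is, if `∑ X ^ s / (α - s)` has positive radius of convergence. It is used for `α`
outside the image of `ℕ`; otherwise the junk value `0⁻¹ = 0` enters. -/
def HasPositiveType (α : K) : Prop :=
  ∃ ρ : ℝ, 0 < ρ ∧ ρ ≤ 1 ∧ ∃ B : ℝ, ∀ s : ℕ, ρ ^ s * ‖α - (s : K)‖⁻¹ ≤ B

theorem neg_mul_prod_Icc_natCast_sub {R : Type*} [CommRing R] (α : R) (s : ℕ) :
    -α * ∏ i ∈ Icc 1 s, ((i : R) - α) = ∏ i ∈ range (s + 1), (-α + (i : R)) := by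
  rw [prod_range_eq_mul_Ico _ s.succ_pos, Nat.cast_zero, add_zero, Nat.succ_eq_add_one,
    Ico_add_one_right_eq_Icc]
  simp only [neg_add_eq_sub]

theorem norm_factorial_mul_inv_norm_prod_Icc_le [IsUltrametricDist K] {α : K} {s : ℕ} {C : ℝ}
    (hα : ∀ i ≤ s, α ≠ (i : K)) (hC : ∀ i ≤ s, ‖α - (i : K)‖⁻¹ ≤ C) :
    ‖(s ! : K)‖ * ‖∏ i ∈ Icc 1 s, ((i : K) - α)‖⁻¹ ≤ ‖α‖ * C := by
  have hα_pos : 0 < ‖α‖ := norm_pos_iff.2 (by simpa using hα 0 s.zero_le)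
  have h : ‖(s ! : K)‖ * ‖-α * ∏ i ∈ Icc 1 s, ((i : K) - α)‖⁻¹ ≤ C := by
    rw [neg_mul_prod_Icc_natCast_sub]
    refine norm_factorial_mul_inv_norm_prod_le (fun i hi ↦ ?_) fun i hi ↦ ?_
    · rw [neg_add_eq_sub]
      exact sub_ne_zero.2 (hα i hi).symm
    · rw [neg_add_eq_sub, norm_sub_rev]
      exact hC i hi
  rw [norm_mul, norm_neg, mul_inv, mul_left_comm] at h
  exact (inv_mul_le_iff₀ hα_pos).1 h

theorem pow_mul_inv_norm_prod_Icc_le_one {α : K} {δ : ℝ} (hδ : 0 ≤ δ)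
    (h : ∀ s : ℕ, δ ≤ ‖(s : K) - α‖) (s : ℕ) :
    δ ^ s * ‖∏ i ∈ Icc 1 s, ((i : K) - α)‖⁻¹ ≤ 1 := by
  refine mul_inv_le_one_of_le₀ ?_ (norm_nonneg _)
  calc δ ^ s = ∏ _i ∈ Icc 1 s, δ := by simp
    _ ≤ ∏ i ∈ Icc 1 s, ‖(i : K) - α‖ := prod_le_prod (fun _ _ ↦ hδ) fun i _ ↦ h i
    _ = ‖∏ i ∈ Icc 1 s, ((i : K) - α)‖ := (norm_prod _ _).symm

theorem HasPositiveType.exists_pow_mul_inv_norm_prod_Icc_le [IsUltrametricDist K] [CharZero K]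
    {α : K} (hα : ∀ s : ℕ, α ≠ (s : K)) (htype : HasPositiveType α) :
    ∃ ρ' : ℝ, 0 < ρ' ∧ ∃ B : ℝ,
      ∀ s : ℕ, ρ' ^ s * ‖∏ i ∈ Icc 1 s, ((i : K) - α)‖⁻¹ ≤ B := by
  obtain ⟨ρ, hρ, hρ_le, B, hB⟩ := htype
  obtain ⟨c, hc, hc_le⟩ := exists_pow_le_norm_factorial K
  refine ⟨ρ * c, mul_pos hρ hc, ‖α‖ * B, fun s ↦ ?_⟩
  set Q := ‖∏ i ∈ Icc 1 s, ((i : K) - α)‖⁻¹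
  have inv_le : ∀ i ≤ s, ‖α - (i : K)‖⁻¹ ≤ B / ρ ^ s := fun i hi ↦ by
    rw [le_div_iff₀' (pow_pos hρ s)]
    refine le_trans ?_ (hB i)
    gcongr ?_ * _
    exact pow_le_pow_of_le_one hρ.le hρ_le hi
  calc (ρ * c) ^ s * Q = ρ ^ s * (c ^ s * Q) := by rw [mul_pow, mul_assoc]
    _ ≤ ρ ^ s * (‖(s ! : K)‖ * Q) := by gcongr; exact hc_le s
    _ ≤ ρ ^ s * (‖α‖ * (B / ρ ^ s)) := by
      gcongr _ * ?_; exact norm_factorial_mul_inv_norm_prod_Icc_le (fun i _ ↦ hα i) inv_le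
    _ = ‖α‖ * B := by field_simp

end PositiveType

theorem stmt4_general {K : Type*} [NormedField K] [IsUltrametricDist K] {α : K}
    (hα : ∀ s : ℕ, α ≠ (s : K)) (htype : HasPositiveType α) :
    ∃ ρ' : ℝ, 0 < ρ' ∧ ∃ B : ℝ,
      ∀ s : ℕ, ρ' ^ s * ‖∏ i ∈ Icc 1 s, ((i : K) - α)‖⁻¹ ≤ B := by
  obtain _ | ⟨p, _, _⟩ := CharP.exists' K
  · exact htype.exists_pow_mul_inv_norm_prod_Icc_le hα
  · have : NeZero p := ⟨(Fact.out : p.Prime).ne_zero⟩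
    obtain ⟨δ, hδ, hδ_le⟩ := exists_pos_forall_le_norm_natCast_sub p hα
    exact ⟨δ, hδ, 1, pow_mul_inv_norm_prod_Icc_le_one hδ.le hδ_le⟩

/-- **Positive radius of convergence of `∑ X^s / ∏_{i=1}^s (i - α)` (from Lemma 3.2.8).**
Let `K` be a complete nonarchimedean field of characteristic zero with `‖p‖ < 1` for a
prime `p`.  If `α ∈ K` is not a natural number and has positive type (i.e. there is
`ρ ∈ (0,1]` with `sup_s ρ^s ‖α - s‖⁻¹ < ∞`), then there exists `ρ' > 0` with
`sup_s ρ'^s ‖∏_{i=1}^s (i - α)‖⁻¹ < ∞`. -/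
theorem stmt4 (K : Type*) [NormedField K] [IsUltrametricDist K] [CompleteSpace K]
    [CharZero K]
    (p : ℕ) (hp : p.Prime) (hpnorm : ‖(p : K)‖ < 1)
    (α : K) (hα : ∀ s : ℕ, α ≠ (s : K))
    (htype : ∃ ρ : ℝ, 0 < ρ ∧ ρ ≤ 1 ∧ ∃ B : ℝ, ∀ s : ℕ, ρ ^ s * ‖α - (s : K)‖⁻¹ ≤ B) :
    ∃ ρ' : ℝ, 0 < ρ' ∧ ∃ B : ℝ,
      ∀ s : ℕ, ρ' ^ s * ‖∏ i ∈ Finset.Icc 1 s, ((i : K) - α)‖⁻¹ ≤ B :=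
  stmt4_general hα htype
end

section
/- Let p be a prime and m ≥ 1 an integer. Let σ, τ ∈ ℤ_p be p-adically non-Liouville, and assume each of σ and τ is either 0 or not a rational integer (so in particular j + σ ≠ 0 for every integer j ≥ 1). For l ∈ ℕ and j' ∈ ℤ, let s_α^{j',l} ∈ ℚ_p denote the coefficient of x^α in the polynomial ∏_{j=1}^l ((j + j' + τ) + x)/(j + σ) ∈ ℚ_p[x]. Then for every real δ > 1 there exists C > 0 such that |s_α^{j',l}|_p ≤ C·δ^{(2m−1)·|j'|} for all 0 ≤ α ≤ m−1, all l ∈ ℕ, and all j' ∈ ℤ with |j'| > l. -/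
open Polynomial

/-- `a ∈ ℤ_p` is `p`-adically non-Liouville: for every `δ > 1` there is `C > 0` with
`‖a + s‖⁻¹ ≤ C δ^{|s|}` for every integer `s` with `a + s ≠ 0`. -/
def IsPAdicNonLiouville {p : ℕ} [Fact p.Prime] (a : ℤ_[p]) : Prop :=
  ∀ δ : ℝ, 1 < δ → ∃ C : ℝ, 0 < C ∧
    ∀ s : ℤ, (a : ℚ_[p]) + (s : ℚ_[p]) ≠ 0 → ‖(a : ℚ_[p]) + (s : ℚ_[p])‖⁻¹ ≤ C * δ ^ s.natAbs

/-!
Writing `‖x‖ = p ^ (-v)`, the exponent `v` is the number of `k ≥ 1` with `p ^ k ∣ x`. Over an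
interval of integers, the numbers of `j` with `p ^ k ∣ j + a` and with `p ^ k ∣ j + σ` differ by at
most one, whatever `a` is, and deleting `α` factors lowers the first of them by at most `α`. If
`‖j + σ‖⁻¹ ≤ B` for all `j ≤ l`, only the `k` with `p ^ k ≤ B` matter for the denominator, so each
term in the Vieta formula for the coefficient of `x ^ α` has norm at most `B ^ (α + 1)` after
division by the denominator. The non-Liouville property provides `B = C * δ ^ l`.
-/

section

open Finset

theorem norm_coeff_prod_X_add_C_le {ι R : Type*} [NormedCommRing R] [NormOneClass R]
    [IsUltrametricDist R] (s : Finset ι) (u : ι → R) (α : ℕ) {B : ℝ} (hB : 0 ≤ B)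
    (h : ∀ t ⊆ s, #t + α = #s → ∏ j ∈ t, ‖u j‖ ≤ B) :
    ‖(∏ j ∈ s, (X + C (u j))).coeff α‖ ≤ B := by
  rcases le_or_gt α #s with hα | hα
  · rw [prod_X_add_C_coeff s u hα]
    refine IsUltrametricDist.norm_sum_le_of_forall_le_of_nonneg hB fun t ht ↦ ?_
    obtain ⟨hts, hcard⟩ := mem_powersetCard.mp ht
    exact (Finset.norm_prod_le t u).trans (h t hts (by omega))
  · have hdeg : (∏ j ∈ s, (X + C (u j))).natDegree ≤ #s := by
      refine (natDegree_prod_le s _).trans (card_eq_sum_ones s ▸ sum_le_sum fun j _ ↦ ?_)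
      exact natDegree_add_C.trans_le natDegree_X_le
    rwa [coeff_eq_zero_of_natDegree_lt (hdeg.trans_lt hα), norm_zero]

theorem prod_C_div_add_C_inv_mul_X {ι F : Type*} [Semifield F] (s : Finset ι) (u w : ι → F) :
    ∏ j ∈ s, (C (u j / w j) + C (w j)⁻¹ * X) = C (∏ j ∈ s, w j)⁻¹ * ∏ j ∈ s, (X + C (u j)) := by
  rw [← prod_inv_distrib, map_prod, ← prod_mul_distrib]
  refine prod_congr rfl fun j _ ↦ ?_
  rw [div_eq_mul_inv, map_mul]
  ring

theorem norm_coeff_prod_C_div_add_C_inv_mul_X_le {ι F : Type*} [NormedField F]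
    [IsUltrametricDist F] (s : Finset ι) (u w : ι → F) (α : ℕ) {B : ℝ} (hB : 0 ≤ B)
    (hw : ∀ j ∈ s, w j ≠ 0)
    (h : ∀ t ⊆ s, #t + α = #s → ∏ j ∈ t, ‖u j‖ ≤ B * ∏ j ∈ s, ‖w j‖) :
    ‖(∏ j ∈ s, (C (u j / w j) + C (w j)⁻¹ * X)).coeff α‖ ≤ B := by
  have hpos : 0 < ∏ j ∈ s, ‖w j‖ := prod_pos fun j hj ↦ norm_pos_iff.mpr (hw j hj)
  rw [prod_C_div_add_C_inv_mul_X, coeff_C_mul, norm_mul, norm_inv, norm_prod,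
    inv_mul_le_iff₀ hpos, mul_comm]
  exact norm_coeff_prod_X_add_C_le s u α (by positivity) h

theorem card_filter_le_card_filter_add_of_subset {ι : Type*} {s t : Finset ι} (hts : t ⊆ s) {α : ℕ}
    (hα : #s ≤ #t + α) (P : ι → Prop) [DecidablePred P] :
    #{j ∈ s | P j} ≤ #{j ∈ t | P j} + α := by
  classical
  have hsub : {j ∈ s | P j} ⊆ {j ∈ t | P j} ∪ s \ t := fun j hj ↦ by
    simp only [mem_union, mem_filter, mem_sdiff] at hj ⊢
    tauto
  have hsdiff := card_sdiff_add_card_eq_card hts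
  have hunion := (card_le_card hsub).trans (card_union_le _ _)
  omega

theorem prod_pow_card_filter_eq_pow_sum_card_filter {ι κ M : Type*} [CommMonoid M] (x : M)
    (s : Finset ι) (t : Finset κ) (r : ι → κ → Prop) [∀ i k, Decidable (r i k)] :
    ∏ i ∈ s, x ^ #{k ∈ t | r i k} = x ^ ∑ k ∈ t, #{i ∈ s | r i k} := by
  rw [prod_pow_eq_pow_sum]
  exact congrArg (x ^ ·) (sum_card_bipartiteAbove_eq_sum_card_bipartiteBelow r)

variable {p : ℕ} [Fact p.Prime]

theorem pow_dvd_iff_le_valuation {x : ℤ_[p]} (hx : x ≠ 0) (k : ℕ) :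
    (p : ℤ_[p]) ^ k ∣ x ↔ k ≤ x.valuation := by
  rw [← Ideal.mem_span_singleton, x.mem_span_pow_iff_le_valuation hx]

theorem norm_eq_inv_pow_valuation {x : ℤ_[p]} (hx : x ≠ 0) : ‖x‖ = (p : ℝ)⁻¹ ^ x.valuation := by
  rw [PadicInt.norm_eq_zpow_neg_valuation hx, zpow_neg, zpow_natCast, inv_pow]

open scoped Classical in
theorem norm_le_inv_pow_card_pow_dvd (K : ℕ) (x : ℤ_[p]) :
    ‖x‖ ≤ (p : ℝ)⁻¹ ^ #{k ∈ Icc 1 K | (p : ℤ_[p]) ^ k ∣ x} := by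
  obtain rfl | hx := eq_or_ne x 0
  · rw [norm_zero]
    positivity
  have hcard : #{k ∈ Icc 1 K | (p : ℤ_[p]) ^ k ∣ x} ≤ x.valuation := by
    have hsub : {k ∈ Icc 1 K | (p : ℤ_[p]) ^ k ∣ x} ⊆ Icc 1 x.valuation := fun k hk ↦ by
      rw [mem_filter, mem_Icc, pow_dvd_iff_le_valuation hx] at hk
      exact mem_Icc.mpr ⟨hk.1.1, hk.2⟩
    simpa using card_le_card hsub
  rw [norm_eq_inv_pow_valuation hx]
  exact pow_le_pow_of_le_one (by positivity) (Nat.cast_inv_le_one p) hcard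

open scoped Classical in
theorem norm_eq_inv_pow_card_pow_dvd {K : ℕ} {x : ℤ_[p]} (hx : x ≠ 0) (hK : x.valuation ≤ K) :
    ‖x‖ = (p : ℝ)⁻¹ ^ #{k ∈ Icc 1 K | (p : ℤ_[p]) ^ k ∣ x} := by
  have hfilter : {k ∈ Icc 1 K | (p : ℤ_[p]) ^ k ∣ x} = Icc 1 x.valuation := by
    ext k
    simp only [mem_filter, mem_Icc, pow_dvd_iff_le_valuation hx]
    omega
  rw [hfilter, Nat.card_Icc, Nat.add_sub_cancel, norm_eq_inv_pow_valuation hx]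

open scoped Classical in
theorem prod_norm_le_inv_pow_sum_card_pow_dvd {ι : Type*} (t : Finset ι) (f : ι → ℤ_[p]) (K : ℕ) :
    ∏ j ∈ t, ‖f j‖ ≤ (p : ℝ)⁻¹ ^ ∑ k ∈ Icc 1 K, #{j ∈ t | (p : ℤ_[p]) ^ k ∣ f j} := by
  rw [← prod_pow_card_filter_eq_pow_sum_card_filter]
  exact prod_le_prod (fun j _ ↦ norm_nonneg _) fun j _ ↦ norm_le_inv_pow_card_pow_dvd K (f j)

open scoped Classical in
theorem prod_norm_eq_inv_pow_sum_card_pow_dvd {ι : Type*} {t : Finset ι} {f : ι → ℤ_[p]} {K : ℕ}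
    (hf : ∀ j ∈ t, f j ≠ 0) (hK : ∀ j ∈ t, (f j).valuation ≤ K) :
    ∏ j ∈ t, ‖f j‖ = (p : ℝ)⁻¹ ^ ∑ k ∈ Icc 1 K, #{j ∈ t | (p : ℤ_[p]) ^ k ∣ f j} := by
  rw [← prod_pow_card_filter_eq_pow_sum_card_filter]
  exact prod_congr rfl fun j hj ↦ norm_eq_inv_pow_card_pow_dvd (hf j hj) (hK j hj)

theorem exists_pow_dvd_natCast_add_iff_modEq (k : ℕ) (a : ℤ_[p]) :
    ∃ v : ℕ, ∀ j : ℕ, (p : ℤ_[p]) ^ k ∣ j + a ↔ j ≡ v [MOD p ^ k] := by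
  refine ⟨(-PadicInt.toZModPow k a).val, fun j ↦ ?_⟩
  rw [← Ideal.mem_span_singleton, ← PadicInt.ker_toZModPow, RingHom.mem_ker,
    ← ZMod.natCast_eq_natCast_iff, ZMod.natCast_zmod_val, map_add, map_natCast,
    eq_neg_iff_add_eq_zero]

open scoped Classical in
theorem exists_card_Icc_pow_dvd_natCast_add_eq_count (k m n : ℕ) (a : ℤ_[p]) :
    ∃ v : ℕ, #{j ∈ Icc m n | (p : ℤ_[p]) ^ k ∣ (j : ℕ) + a} =
      (n + 1 - m).count (· ≡ v [MOD p ^ k]) := by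
  obtain ⟨v, hv⟩ := exists_pow_dvd_natCast_add_iff_modEq k ((m : ℤ_[p]) + a)
  refine ⟨v, ?_⟩
  have hshift (j : ℕ) : (p : ℤ_[p]) ^ k ∣ ((m + j : ℕ) : ℤ_[p]) + a ↔ j ≡ v [MOD p ^ k] := by
    rw [← hv, Nat.cast_add, add_left_comm, add_assoc]
  rw [Nat.count_eq_card_filter_range, card_filter, card_filter, ← Ico_add_one_right_eq_Icc,
    sum_Ico_eq_sum_range]
  simp only [hshift]

open scoped Classical in
theorem card_Icc_pow_dvd_natCast_add_le (k m n : ℕ) (a b : ℤ_[p]) :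
    #{j ∈ Icc m n | (p : ℤ_[p]) ^ k ∣ (j : ℕ) + b} ≤
      #{j ∈ Icc m n | (p : ℤ_[p]) ^ k ∣ (j : ℕ) + a} + 1 := by
  obtain ⟨v, hv⟩ := exists_card_Icc_pow_dvd_natCast_add_eq_count k m n a
  obtain ⟨w, hw⟩ := exists_card_Icc_pow_dvd_natCast_add_eq_count k m n b
  have hpk : 0 < p ^ k := pow_pos (Fact.out : p.Prime).pos k
  rw [hv, hw, Nat.count_modEq_card _ hpk, Nat.count_modEq_card _ hpk]
  split_ifs <;> omega

open scoped Classical in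
theorem sum_card_Icc_pow_dvd_natCast_add_le (K m n : ℕ) (a b : ℤ_[p]) {t : Finset ℕ}
    (ht : t ⊆ Icc m n) {α : ℕ} (hα : #(Icc m n) ≤ #t + α) :
    ∑ k ∈ Icc 1 K, #{j ∈ Icc m n | (p : ℤ_[p]) ^ k ∣ (j : ℕ) + b} ≤
      ∑ k ∈ Icc 1 K, #{j ∈ t | (p : ℤ_[p]) ^ k ∣ (j : ℕ) + a} + K * (α + 1) := by
  calc ∑ k ∈ Icc 1 K, #{j ∈ Icc m n | (p : ℤ_[p]) ^ k ∣ (j : ℕ) + b}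
      ≤ ∑ k ∈ Icc 1 K, (#{j ∈ t | (p : ℤ_[p]) ^ k ∣ (j : ℕ) + a} + (α + 1)) :=
        sum_le_sum fun k _ ↦ by
          have hshift := card_Icc_pow_dvd_natCast_add_le k m n a b
          have hdelete := card_filter_le_card_filter_add_of_subset ht hα
            fun j : ℕ ↦ (p : ℤ_[p]) ^ k ∣ j + a
          omega
    _ = ∑ k ∈ Icc 1 K, #{j ∈ t | (p : ℤ_[p]) ^ k ∣ (j : ℕ) + a} + K * (α + 1) := by
        rw [sum_add_distrib, sum_const, Nat.card_Icc, Nat.add_sub_cancel, smul_eq_mul]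

theorem prod_norm_natCast_add_le_of_valuation_le {m n K : ℕ} {b : ℤ_[p]}
    (hb : ∀ j ∈ Icc m n, (j : ℤ_[p]) + b ≠ 0)
    (hK : ∀ j ∈ Icc m n, ((j : ℤ_[p]) + b).valuation ≤ K) (a : ℤ_[p]) {t : Finset ℕ}
    (ht : t ⊆ Icc m n) {α : ℕ} (hα : #(Icc m n) ≤ #t + α) :
    ∏ j ∈ t, ‖(j : ℤ_[p]) + a‖ ≤ ((p : ℝ) ^ K) ^ (α + 1) * ∏ j ∈ Icc m n, ‖(j : ℤ_[p]) + b‖ := by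
  classical
  have hp : (p : ℝ) ≠ 0 := NeZero.ne _
  set M := ∑ k ∈ Icc 1 K, #{j ∈ t | (p : ℤ_[p]) ^ k ∣ (j : ℕ) + a}
  set N := ∑ k ∈ Icc 1 K, #{j ∈ Icc m n | (p : ℤ_[p]) ^ k ∣ (j : ℕ) + b}
  have hNM : N ≤ M + K * (α + 1) := sum_card_Icc_pow_dvd_natCast_add_le K m n a b ht hα
  calc ∏ j ∈ t, ‖(j : ℤ_[p]) + a‖
      ≤ (p : ℝ)⁻¹ ^ M := prod_norm_le_inv_pow_sum_card_pow_dvd t _ K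
    _ = ((p : ℝ) ^ K) ^ (α + 1) * (p : ℝ)⁻¹ ^ (M + K * (α + 1)) := by
        rw [← pow_mul, pow_add, mul_left_comm, ← mul_pow, mul_inv_cancel₀ hp, one_pow, mul_one]
    _ ≤ ((p : ℝ) ^ K) ^ (α + 1) * (p : ℝ)⁻¹ ^ N := by
        gcongr ?_ * ?_
        exact pow_le_pow_of_le_one (by positivity) (Nat.cast_inv_le_one p) hNM
    _ = ((p : ℝ) ^ K) ^ (α + 1) * ∏ j ∈ Icc m n, ‖(j : ℤ_[p]) + b‖ := by
        rw [prod_norm_eq_inv_pow_sum_card_pow_dvd hb hK]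

theorem prod_norm_natCast_add_le_of_inv_norm_le {m n : ℕ} {b : ℤ_[p]} {B : ℝ} (hB : 1 ≤ B)
    (hb : ∀ j ∈ Icc m n, (j : ℤ_[p]) + b ≠ 0) (hbB : ∀ j ∈ Icc m n, ‖(j : ℤ_[p]) + b‖⁻¹ ≤ B)
    (a : ℤ_[p]) {t : Finset ℕ} (ht : t ⊆ Icc m n) {α : ℕ} (hα : #(Icc m n) ≤ #t + α) :
    ∏ j ∈ t, ‖(j : ℤ_[p]) + a‖ ≤ B ^ (α + 1) * ∏ j ∈ Icc m n, ‖(j : ℤ_[p]) + b‖ := by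
  have hp : (1 : ℝ) < p := mod_cast (Fact.out : p.Prime).one_lt
  obtain ⟨K, hKB, hBK⟩ := exists_nat_pow_near hB hp
  have hK : ∀ j ∈ Icc m n, ((j : ℤ_[p]) + b).valuation ≤ K := fun j hj ↦ by
    have hlt := (hbB j hj).trans_lt hBK
    rw [norm_eq_inv_pow_valuation (hb j hj), inv_pow, inv_inv, pow_lt_pow_iff_right₀ hp] at hlt
    omega
  refine (prod_norm_natCast_add_le_of_valuation_le hb hK a ht hα).trans ?_
  gcongr

theorem IsPAdicNonLiouville.exists_inv_norm_natCast_add_le {σ : ℤ_[p]} (hσ : IsPAdicNonLiouville σ)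
    {δ : ℝ} (hδ : 1 < δ) :
    ∃ C : ℝ, 1 ≤ C ∧ ∀ j l : ℕ, j ≤ l → (j : ℤ_[p]) + σ ≠ 0 → ‖(j : ℤ_[p]) + σ‖⁻¹ ≤ C * δ ^ l := by
  obtain ⟨C, -, hC⟩ := hσ δ hδ
  refine ⟨max C 1, le_max_right C 1, fun j l hjl hj ↦ ?_⟩
  have hne : (σ : ℚ_[p]) + ((j : ℤ) : ℚ_[p]) ≠ 0 := by
    rw [add_comm]
    exact_mod_cast PadicInt.coe_ne_zero.mpr hj
  calc ‖(j : ℤ_[p]) + σ‖⁻¹ = ‖(σ : ℚ_[p]) + ((j : ℤ) : ℚ_[p])‖⁻¹ := by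
        rw [PadicInt.norm_def, add_comm]
        push_cast
        rfl
    _ ≤ C * δ ^ j := hC j hne
    _ ≤ max C 1 * δ ^ l := by
        gcongr
        exacts [le_max_left C 1, hδ.le]

theorem stmt5_general (m : ℕ) {σ : ℤ_[p]} (hσNL : IsPAdicNonLiouville σ)
    (hσ : ∀ j : ℕ, j ≠ 0 → (j : ℚ_[p]) + σ ≠ 0) {δ : ℝ} (hδ : 1 < δ) :
    ∃ C : ℝ, 0 < C ∧ ∀ a : ℤ_[p], ∀ α < m, ∀ l : ℕ,
      ‖(∏ j ∈ Icc 1 l,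
          (Polynomial.C (((j : ℚ_[p]) + a) / (j + σ)) +
            Polynomial.C ((j : ℚ_[p]) + σ)⁻¹ * X)).coeff α‖ ≤ C * δ ^ (m * l) := by
  obtain ⟨C, hC, hbound⟩ := hσNL.exists_inv_norm_natCast_add_le hδ
  refine ⟨C ^ m, by positivity, fun a α hα l ↦ ?_⟩
  have hne : ∀ j ∈ Icc 1 l, (j : ℤ_[p]) + σ ≠ 0 := fun j hj ↦
    PadicInt.coe_ne_zero.mp <| mod_cast hσ j (Nat.one_le_iff_ne_zero.mp (mem_Icc.mp hj).1)
  have hB : 1 ≤ C * δ ^ l := one_le_mul_of_one_le_of_one_le hC (one_le_pow₀ hδ.le)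
  have hterm : ∀ t ⊆ Icc 1 l, #t + α = #(Icc 1 l) →
      ∏ j ∈ t, ‖(j : ℚ_[p]) + a‖ ≤
        (C * δ ^ l) ^ (α + 1) * ∏ j ∈ Icc 1 l, ‖(j : ℚ_[p]) + σ‖ := fun t ht hcard ↦
    mod_cast prod_norm_natCast_add_le_of_inv_norm_le hB hne
      (fun j hj ↦ hbound j l (mem_Icc.mp hj).2 (hne j hj)) a ht hcard.ge
  calc _ ≤ (C * δ ^ l) ^ (α + 1) :=
        norm_coeff_prod_C_div_add_C_inv_mul_X_le _ _ _ α (by positivity)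
          (fun j hj ↦ mod_cast PadicInt.coe_ne_zero.mpr (hne j hj)) hterm
    _ ≤ (C * δ ^ l) ^ m := pow_le_pow_right₀ hB hα
    _ = C ^ m * δ ^ (m * l) := by rw [mul_pow, ← pow_mul, mul_comm l]

end

theorem natCast_add_ne_zero_of_eq_zero_or_ne_intCast {R : Type*} [Ring R] [CharZero R] {x : R}
    (hx : x = 0 ∨ ∀ i : ℤ, x ≠ i) {j : ℕ} (hj : j ≠ 0) : (j : R) + x ≠ 0 := by
  rcases hx with rfl | hx
  · simpa using hj
  · exact fun h ↦ hx (-j) (by simpa using eq_neg_of_add_eq_zero_right h)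

/-- **Claim 4 in the proof of Lemma 3.4.1.**
Let `σ, τ ∈ ℤ_p` be `p`-adically non-Liouville, each either `0` or not a rational
integer.  Let `s_α^{j',l}` be the coefficient of `x^α` in
`∏_{j=1}^l ((j + j' + τ) + x)/(j + σ) ∈ ℚ_p[x]`.  Then for every `δ > 1` there is
`C > 0` with `|s_α^{j',l}| ≤ C δ^{(2m-1)|j'|}` for all `α ≤ m-1`, `l ∈ ℕ` and
`j' ∈ ℤ` with `|j'| > l`. -/
theorem stmt5 (p : ℕ) [Fact p.Prime] (m : ℕ) (hm : 1 ≤ m)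
    (σ τ : ℤ_[p])
    (hσNL : IsPAdicNonLiouville σ) (hτNL : IsPAdicNonLiouville τ)
    (hσ : σ = 0 ∨ ∀ i : ℤ, (σ : ℚ_[p]) ≠ (i : ℚ_[p]))
    (hτ : τ = 0 ∨ ∀ i : ℤ, (τ : ℚ_[p]) ≠ (i : ℚ_[p])) :
    ∀ δ : ℝ, 1 < δ → ∃ C : ℝ, 0 < C ∧
      ∀ α : ℕ, α ≤ m - 1 → ∀ l : ℕ, ∀ j' : ℤ, (l : ℤ) < |j'| →
        ‖(∏ j ∈ Finset.Icc 1 l,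
            (Polynomial.C ((((j : ℚ_[p]) + (j' : ℚ_[p]) + (τ : ℚ_[p])) /
              ((j : ℚ_[p]) + (σ : ℚ_[p])))) +
             Polynomial.C (((j : ℚ_[p]) + (σ : ℚ_[p]))⁻¹) * Polynomial.X)).coeff α‖
          ≤ C * δ ^ ((2 * m - 1) * j'.natAbs) := by
  intro δ hδ
  obtain ⟨C, hC, hbound⟩ := stmt5_general m hσNL (fun _ ↦
    natCast_add_ne_zero_of_eq_zero_or_ne_intCast (hσ.imp_left PadicInt.coe_eq_zero.mpr)) hδ
  refine ⟨C, hC, fun α hα l j' hl ↦ ?_⟩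
  calc _ ≤ C * δ ^ (m * l) := by simpa [add_assoc] using hbound (j' + τ) α (by omega) l
    _ ≤ C * δ ^ ((2 * m - 1) * j'.natAbs) := by
      gcongr
      exacts [hδ.le, by omega, by zify; exact hl.le]
end

section
/- Let p be a prime, m ≥ 1 and n₀ ≥ 1 integers. Let ξ', ξ_1, …, ξ_{n₀} ∈ ℤ_p be such that for every k the differences ξ_1 − ξ_k and ξ_k − ξ' are p-adically non-Liouville and each is either 0 or not a rational integer (so the denominators j ± (ξ_1 − ξ_k) for j ≥ 1 are nonzero). Let Q ∈ ℤ_p[x] be a polynomial. For l ∈ ℕ and j' ∈ ℤ, let c_α^{j',l} ∈ ℚ_p denote the coefficient of x^α in the polynomial Q(x + ξ' + j') · ∏_{k=1}^{n₀} ∏_{j=1}^{l} [ ((j − j' + ξ_k − ξ') − x)/(j − (ξ_1 − ξ_k)) · ((j + j' − ξ_k + ξ') + x)/(j + (ξ_1 − ξ_k)) ]^m ∈ ℚ_p[x]. Then there exists a constant A > 0 such that for every real δ > 1 there exists C > 0 with |c_α^{j',l}|_p ≤ C·δ^{A·|j'|} for all 0 ≤ α ≤ m−1, all l ∈ ℕ,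 and all j' ∈ ℤ with |j'| > l. -/
open Polynomial

/-- The polynomial
`Q(x + ξ' + j') ∏_{k=1}^{n₀} ∏_{j=1}^{l} [((j - j' + ξ_k - ξ') - x)/(j - (ξ_1 - ξ_k)) ·
((j + j' - ξ_k + ξ') + x)/(j + (ξ_1 - ξ_k))]^m ∈ ℚ_p[x]`
appearing in claim 3 of the proof of Lemma 3.4.1 (with `ξ_1 = ξ 0`). -/
noncomputable def claim3Poly (p : ℕ) [Fact p.Prime] (m n₀ : ℕ) (hn₀ : 0 < n₀)
    (ξ' : ℤ_[p]) (ξ : Fin n₀ → ℤ_[p]) (Q : Polynomial ℤ_[p]) (j' : ℤ) (l : ℕ) :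
    Polynomial ℚ_[p] :=
  (Q.map (PadicInt.Coe.ringHom)).comp
      (Polynomial.X + Polynomial.C ((ξ' : ℚ_[p]) + (j' : ℚ_[p]))) *
    ∏ k : Fin n₀, ∏ j ∈ Finset.Icc 1 l,
      ((Polynomial.C (((j : ℚ_[p]) - ((ξ ⟨0, hn₀⟩ : ℚ_[p]) - (ξ k : ℚ_[p])))⁻¹) *
          (Polynomial.C ((j : ℚ_[p]) - (j' : ℚ_[p]) + (ξ k : ℚ_[p]) - (ξ' : ℚ_[p])) -
            Polynomial.X)) *
        (Polynomial.C (((j : ℚ_[p]) + ((ξ ⟨0, hn₀⟩ : ℚ_[p]) - (ξ k : ℚ_[p])))⁻¹) *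
          (Polynomial.C ((j : ℚ_[p]) + (j' : ℚ_[p]) - (ξ k : ℚ_[p]) + (ξ' : ℚ_[p])) +
            Polynomial.X))) ^ m

/-!
Write `d = ξ_1 - ξ_k`. After multiplication by `l!` in each of the two products over `j`, the
denominators become inverse binomial coefficients `l! / ∏_{j=1}^l (j ± d)`. Decomposing these into
partial fractions over `j ± d` with integer coefficients shows that they are no larger than the
largest single `|j ± d|_p⁻¹`, hence grow subexponentially in `l` because `d` is non-Liouville.

The numerators divided by `l!` are binomial coefficients with argument `c ± x`, `c ∈ ℤ_p`. Their
Gauss norm on the disc of radius `p⁻ᴺ` with `l ≤ p ^ N` is at most `1`: on that disc each factor is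
dominated by the value of the corresponding factor at a natural number congruent to `c` modulo
`p ^ N`, and integers have integral binomial coefficients. With `p ^ N ≤ p (l + 1)`, passing from
the Gauss norm to the coefficient of `x ^ α` costs only the polynomial factor `(p (l + 1)) ^ α`.
-/

open Finset
open scoped Nat

/-- Subexponential growth of a sequence of real numbers, up to sign: `u n = O(δ ^ n)` for every
`δ > 1`. Since `δ ^ n` never vanishes, the bound is asked for at every `n`. -/
def IsSubexponential (u : ℕ → ℝ) : Prop :=
  ∀ δ : ℝ, 1 < δ → ∃ C : ℝ, 0 < C ∧ ∀ n, |u n| ≤ C * δ ^ n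

namespace IsSubexponential

lemma const (a : ℝ) : IsSubexponential fun _ ↦ a := fun δ hδ ↦
  ⟨|a| + 1, by positivity, fun n ↦ (le_add_of_nonneg_right zero_le_one).trans
    (le_mul_of_one_le_right (by positivity) (one_le_pow₀ hδ.le))⟩

lemma natCast_add_one : IsSubexponential fun n ↦ (n : ℝ) + 1 := by
  intro δ hδ
  have hδ' : 0 < δ - 1 := sub_pos.2 hδ
  refine ⟨(δ - 1)⁻¹ + 1, by positivity, fun n ↦ ?_⟩
  have bernoulli : (n : ℝ) * (δ - 1) ≤ δ ^ n := by
    have := one_add_mul_le_pow (a := δ - 1) (by linarith) n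
    rw [add_sub_cancel] at this
    linarith
  rw [abs_of_nonneg (by positivity), add_mul, one_mul, ← div_eq_inv_mul]
  exact add_le_add ((le_div_iff₀ hδ').2 bernoulli) (one_le_pow₀ hδ.le)

lemma mul {u v : ℕ → ℝ} (hu : IsSubexponential u) (hv : IsSubexponential v) :
    IsSubexponential fun n ↦ u n * v n := by
  intro δ hδ
  have hsqrt : 1 < √δ := Real.lt_sqrt_of_sq_lt (by simpa using hδ)
  obtain ⟨C, hC, hu⟩ := hu _ hsqrt
  obtain ⟨D, hD, hv⟩ := hv _ hsqrt
  refine ⟨C * D, by positivity, fun n ↦ ?_⟩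
  calc |u n * v n| = |u n| * |v n| := abs_mul _ _
    _ ≤ (C * √δ ^ n) * (D * √δ ^ n) := by gcongr <;> apply_assumption
    _ = C * D * δ ^ n := by
      rw [mul_mul_mul_comm, ← mul_pow, Real.mul_self_sqrt (by linarith)]

lemma prod {ι : Type*} (s : Finset ι) {u : ι → ℕ → ℝ} (hu : ∀ i ∈ s, IsSubexponential (u i)) :
    IsSubexponential fun n ↦ ∏ i ∈ s, u i n := by
  induction s using Finset.cons_induction with
  | empty => simpa using const 1
  | cons i s hi ih =>
    simp only [prod_cons]
    exact (hu i (mem_cons_self i s)).mul (ih fun j hj ↦ hu j (mem_cons_of_mem hj))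

lemma pow {u : ℕ → ℝ} (hu : IsSubexponential u) (m : ℕ) : IsSubexponential fun n ↦ u n ^ m := by
  simpa using prod (range m) fun _ _ ↦ hu

end IsSubexponential

section InverseBinomial

lemma prod_Icc_natCast_add_eq_ascPochhammer_eval {R : Type*} [CommSemiring R] (c : R) (l : ℕ) :
    ∏ j ∈ Icc 1 l, ((j : R) + c) = (ascPochhammer R l).eval (c + 1) := by
  induction l with
  | zero => simp
  | succ l ih =>
    rw [prod_Icc_succ_top (Nat.le_add_left 1 l), ih, ascPochhammer_succ_eval]
    push_cast
    ring

lemma ascPochhammer_succ_eval_left {R : Type*} [CommSemiring R] (n : ℕ) (c : R) :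
    (ascPochhammer R (n + 1)).eval c = c * (ascPochhammer R n).eval (c + 1) := by
  simp [ascPochhammer_succ_left]

/-- The inverse of the generalized binomial coefficient `(d + l choose l)`. -/
def invBinom {K : Type*} [Field K] (d : K) (l : ℕ) : K :=
  (l ! : K) / ∏ j ∈ Icc 1 l, ((j : K) + d)

variable {K : Type*}

lemma factorial_succ_div_ascPochhammer_eval [Field K] (n : ℕ) (c : K)
    (hc : ∀ j ≤ n + 1, c + j ≠ 0) :
    ((n + 1)! : K) / (ascPochhammer K (n + 2)).eval c =
      n ! / (ascPochhammer K (n + 1)).eval c - n ! / (ascPochhammer K (n + 1)).eval (c + 1) := by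
  have hfirst : c ≠ 0 := by simpa using hc 0 (Nat.zero_le _)
  have hlast : c + ((n + 1 : ℕ) : K) ≠ 0 := hc (n + 1) le_rfl
  have hleft : (ascPochhammer K (n + 2)).eval c = c * (ascPochhammer K (n + 1)).eval (c + 1) :=
    ascPochhammer_succ_eval_left (n + 1) c
  have hright : (ascPochhammer K (n + 2)).eval c =
      (ascPochhammer K (n + 1)).eval c * (c + ((n + 1 : ℕ) : K)) :=
    ascPochhammer_succ_eval (n + 1) c
  rw [← mul_div_mul_left _ ((ascPochhammer K (n + 1)).eval (c + 1)) hfirst, ← hleft,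
    ← mul_div_mul_right _ ((ascPochhammer K (n + 1)).eval c) hlast, ← hright, ← sub_div,
    Nat.factorial_succ]
  push_cast
  ring

variable [NormedField K] [IsUltrametricDist K]

lemma norm_factorial_div_ascPochhammer_eval_le {B : ℝ} (n : ℕ) (c : K)
    (hc : ∀ j ≤ n, c + j ≠ 0) (hB : ∀ j ≤ n, ‖c + j‖⁻¹ ≤ B) :
    ‖(n ! : K) / (ascPochhammer K (n + 1)).eval c‖ ≤ B := by
  induction n generalizing c with
  | zero => simpa using hB 0 le_rfl
  | succ n ih =>
    have shift (j : ℕ) : c + 1 + (j : K) = c + ((j + 1 : ℕ) : K) := by push_cast; ring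
    rw [factorial_succ_div_ascPochhammer_eval n c hc, sub_eq_add_neg]
    refine (IsUltrametricDist.norm_add_le_max _ _).trans (max_le ?_ ((norm_neg _).trans_le ?_))
    · exact ih c (fun j hj ↦ hc j (by omega)) fun j hj ↦ hB j (by omega)
    · exact ih (c + 1) (fun j hj ↦ shift j ▸ hc (j + 1) (by omega))
        fun j hj ↦ shift j ▸ hB (j + 1) (by omega)

lemma norm_invBinom_le {B : ℝ} (hB₁ : 1 ≤ B) (d : K) (l : ℕ)
    (hd : ∀ j ∈ Icc 1 l, (j : K) + d ≠ 0) (hB : ∀ j ∈ Icc 1 l, ‖(j : K) + d‖⁻¹ ≤ B) :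
    ‖invBinom d l‖ ≤ B := by
  cases l with
  | zero => simpa [invBinom] using hB₁
  | succ n =>
    have shift (j : ℕ) : d + 1 + (j : K) = ((j + 1 : ℕ) : K) + d := by push_cast; ring
    have hmem {j : ℕ} (hj : j ≤ n) : j + 1 ∈ Icc 1 (n + 1) := by simpa using hj
    rw [invBinom, prod_Icc_natCast_add_eq_ascPochhammer_eval, Nat.factorial_succ, Nat.cast_mul,
      mul_div_assoc, norm_mul]
    refine (mul_le_of_le_one_left (norm_nonneg _)
      (IsUltrametricDist.norm_natCast_le_one K _)).trans ?_
    exact norm_factorial_div_ascPochhammer_eval_le n (d + 1)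
      (fun j hj ↦ shift j ▸ hd _ (hmem hj)) fun j hj ↦ shift j ▸ hB _ (hmem hj)

end InverseBinomial

section GaussNorm

variable {K : Type*} [NormedField K] [IsUltrametricDist K] {ρ : ℝ}

/-- The Gauss norm `f ↦ max_i ‖f_i‖ ρ ^ i` of radius `ρ > 0`, bundled as an absolute value on `K[X]`
so that it commutes with products. -/
noncomputable def gaussAbs (K : Type*) [NormedField K] [IsUltrametricDist K] {ρ : ℝ} (hρ : 0 < ρ) :
    AbsoluteValue K[X] ℝ :=
  haveI : IsAbsoluteValue (gaussNorm (NormedField.toAbsoluteValue K) ρ) :=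
    gaussNorm_isAbsoluteValue IsUltrametricDist.isNonarchimedean_norm hρ
  IsAbsoluteValue.toAbsoluteValue (gaussNorm (NormedField.toAbsoluteValue K) ρ)

lemma gaussAbs_C (hρ : 0 < ρ) (a : K) : gaussAbs K hρ (C a) = ‖a‖ :=
  gaussNorm_C (NormedField.toAbsoluteValue K) ρ a

lemma gaussAbs_X (hρ : 0 < ρ) : gaussAbs K hρ X = ρ := by
  rw [← monomial_one_one_eq_X]
  exact (gaussNorm_monomial (NormedField.toAbsoluteValue K) ρ 1 1).trans (by simp)

lemma gaussAbs_add_le_max (hρ : 0 < ρ) (f g : K[X]) :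
    gaussAbs K hρ (f + g) ≤ max (gaussAbs K hρ f) (gaussAbs K hρ g) :=
  isNonarchimedean_gaussNorm (NormedField.toAbsoluteValue K)
    IsUltrametricDist.isNonarchimedean_norm hρ.le f g

lemma gaussAbs_C_add_X_le (hρ : 0 < ρ) (a : K) : gaussAbs K hρ (C a + X) ≤ max ‖a‖ ρ := by
  simpa only [gaussAbs_C, gaussAbs_X] using gaussAbs_add_le_max hρ (C a) X

lemma gaussAbs_C_sub_X_le (hρ : 0 < ρ) (a : K) : gaussAbs K hρ (C a - X) ≤ max ‖a‖ ρ := by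
  simpa only [sub_eq_add_neg, AbsoluteValue.map_neg, gaussAbs_C, gaussAbs_X] using
    gaussAbs_add_le_max hρ (C a) (-X)

lemma norm_coeff_mul_pow_le_gaussAbs (hρ : 0 < ρ) (f : K[X]) (i : ℕ) :
    ‖f.coeff i‖ * ρ ^ i ≤ gaussAbs K hρ f :=
  le_gaussNorm (NormedField.toAbsoluteValue K) f hρ.le i

lemma gaussAbs_le_one_of_norm_coeff_le_one (hρ : 0 < ρ) (hρ₁ : ρ ≤ 1) {f : K[X]}
    (hf : ∀ i, ‖f.coeff i‖ ≤ 1) : gaussAbs K hρ f ≤ 1 := by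
  obtain ⟨i, hi⟩ := exists_eq_gaussNorm (NormedField.toAbsoluteValue K) ρ f
  exact hi.trans_le (mul_le_one₀ (hf i) (by positivity) (pow_le_one₀ hρ.le hρ₁))

end GaussNorm

section Padic

variable {p : ℕ} [Fact p.Prime]

lemma zpow_neg_le_norm_natCast {N n : ℕ} (hn : 0 < n) (hnN : n < p ^ (N + 1)) :
    (p : ℝ) ^ (-N : ℤ) ≤ ‖(n : ℚ_[p])‖ := by
  by_contra! hlt
  have hle : ‖((n : ℤ) : ℚ_[p])‖ ≤ (p : ℝ) ^ (-(N + 1 : ℕ) : ℤ) := by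
    rw [Padic.norm_le_pow_iff_norm_lt_pow_add_one]
    push_cast
    simpa using hlt
  rw [Padic.norm_int_le_pow_iff_dvd] at hle
  exact (Nat.le_of_dvd hn (mod_cast hle)).not_gt hnN

/- Replacing `c` by its residue `c' < p ^ N` makes every factor `j + c'` a positive integer below
`p ^ (N + 1)`, so that its norm absorbs both the error `‖c - c'‖ ≤ p⁻ᴺ` and the term `p⁻ᴺ`. -/
lemma prod_max_norm_le_norm_factorial {N l : ℕ} (hl : l ≤ p ^ N) (c : ℤ_[p]) :
    ∏ j ∈ Icc 1 l, max ‖(j : ℚ_[p]) + c‖ ((p : ℝ) ^ (-N : ℤ)) ≤ ‖(l ! : ℚ_[p])‖ := by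
  set c' : ℕ := c.appr N
  have hc' : ‖(c : ℚ_[p]) - (c' : ℚ_[p])‖ ≤ (p : ℝ) ^ (-N : ℤ) := by
    simpa [PadicInt.norm_def] using
      (PadicInt.norm_le_pow_iff_mem_span_pow _ N).2 (c.appr_spec N)
  have hfactor : ∀ j ∈ Icc 1 l,
      max ‖(j : ℚ_[p]) + c‖ ((p : ℝ) ^ (-N : ℤ)) ≤ ‖((j + c' : ℤ_[p]) : ℚ_[p])‖ := by
    intro j hj
    obtain ⟨hj₁, hjl⟩ := mem_Icc.1 hj
    have hlt : j + c' < p ^ (N + 1) := by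
      have htwo : p ^ N * 2 ≤ p ^ (N + 1) :=
        pow_succ p N ▸ Nat.mul_le_mul_left _ (Fact.out : p.Prime).two_le
      have := c.appr_lt N
      omega
    have hlow : (p : ℝ) ^ (-N : ℤ) ≤ ‖(j : ℚ_[p]) + c'‖ :=
      mod_cast zpow_neg_le_norm_natCast (p := p) (by omega : 0 < j + c') hlt
    have hsplit : (j : ℚ_[p]) + c = (j + c') + (c - c') := by ring
    push_cast
    refine max_le ?_ hlow
    rw [hsplit]
    exact (IsUltrametricDist.norm_add_le_max _ _).trans (max_le le_rfl (hc'.trans hlow))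
  calc ∏ j ∈ Icc 1 l, max ‖(j : ℚ_[p]) + c‖ ((p : ℝ) ^ (-N : ℤ))
      ≤ ∏ j ∈ Icc 1 l, ‖(j + c' : ℤ_[p])‖ :=
        prod_le_prod (fun _ _ ↦ le_max_of_le_left (norm_nonneg _)) hfactor
    _ = ‖(ascPochhammer ℤ_[p] l).eval (c' + 1 : ℤ_[p])‖ := by
        rw [← norm_prod, prod_Icc_natCast_add_eq_ascPochhammer_eval]
    _ ≤ ‖(l ! : ℤ_[p])‖ := PadicInt.norm_ascPochhammer_le l _
    _ = ‖(l ! : ℚ_[p])‖ := by simp [PadicInt.norm_def]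

variable (p) in
lemma zpow_neg_pos (N : ℕ) : 0 < (p : ℝ) ^ (-N : ℤ) :=
  zpow_pos (mod_cast (Fact.out : p.Prime).pos) _

variable (p) in
lemma zpow_neg_le_one (N : ℕ) : (p : ℝ) ^ (-N : ℤ) ≤ 1 :=
  zpow_le_one_of_nonpos₀ (mod_cast (Fact.out : p.Prime).one_le) (by simp)

lemma gaussAbs_prod_C_inv_mul_le {N l : ℕ} (hl : l ≤ p ^ N) (c : ℤ_[p]) (d : ℚ_[p])
    {f : ℕ → ℚ_[p][X]}
    (hf : ∀ j, gaussAbs ℚ_[p] (zpow_neg_pos p N) (f j) ≤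
      max ‖(j : ℚ_[p]) + c‖ ((p : ℝ) ^ (-N : ℤ))) :
    gaussAbs ℚ_[p] (zpow_neg_pos p N) (∏ j ∈ Icc 1 l, C ((j : ℚ_[p]) + d)⁻¹ * f j) ≤
      ‖invBinom d l‖ := by
  rw [prod_mul_distrib, map_mul, ← map_prod, gaussAbs_C, prod_inv_distrib, map_prod, mul_comm,
    invBinom, div_eq_mul_inv, norm_mul]
  gcongr
  exact (prod_le_prod (fun j _ ↦ AbsoluteValue.nonneg _ _) fun j _ ↦ hf j).trans
    (prod_max_norm_le_norm_factorial hl c)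

lemma gaussAbs_map_comp_X_add_C_le_one {ρ : ℝ} (hρ : 0 < ρ) (hρ₁ : ρ ≤ 1) (Q : ℤ_[p][X])
    (b : ℤ_[p]) :
    gaussAbs ℚ_[p] hρ ((Q.map PadicInt.Coe.ringHom).comp (X + C (b : ℚ_[p]))) ≤ 1 := by
  have hmap : (Q.map PadicInt.Coe.ringHom).comp (X + C (b : ℚ_[p])) =
      (Q.comp (X + C b)).map PadicInt.Coe.ringHom := by
    rw [Polynomial.map_comp, Polynomial.map_add, map_X, map_C]
    rfl
  rw [hmap]
  refine gaussAbs_le_one_of_norm_coeff_le_one hρ hρ₁ fun i ↦ ?_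
  rw [coeff_map]
  exact PadicInt.norm_le_one _

lemma gaussAbs_claim3Poly_le {N l : ℕ} (hl : l ≤ p ^ N) (m n₀ : ℕ) (hn₀ : 0 < n₀) (ξ' : ℤ_[p])
    (ξ : Fin n₀ → ℤ_[p]) (Q : ℤ_[p][X]) (j' : ℤ) :
    gaussAbs ℚ_[p] (zpow_neg_pos p N) (claim3Poly p m n₀ hn₀ ξ' ξ Q j' l) ≤
      ∏ k, (‖invBinom ((-(ξ ⟨0, hn₀⟩ - ξ k) : ℤ_[p]) : ℚ_[p]) l‖ *
        ‖invBinom ((ξ ⟨0, hn₀⟩ - ξ k : ℤ_[p]) : ℚ_[p]) l‖) ^ m := by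
  have hQ := gaussAbs_map_comp_X_add_C_le_one (zpow_neg_pos p N) (zpow_neg_le_one p N) Q (ξ' + j')
  have hminus (k : Fin n₀) := gaussAbs_prod_C_inv_mul_le hl (-j' + ξ k - ξ')
    ((-(ξ ⟨0, hn₀⟩ - ξ k) : ℤ_[p]) : ℚ_[p]) fun j ↦ gaussAbs_C_sub_X_le (zpow_neg_pos p N) _
  have hplus (k : Fin n₀) := gaussAbs_prod_C_inv_mul_le hl (j' - ξ k + ξ')
    ((ξ ⟨0, hn₀⟩ - ξ k : ℤ_[p]) : ℚ_[p]) fun j ↦ gaussAbs_C_add_X_le (zpow_neg_pos p N) _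
  rw [claim3Poly, map_mul, map_prod]
  push_cast at hQ hminus hplus ⊢
  simp only [← sub_eq_add_neg, ← add_sub_assoc, ← add_assoc] at hQ hminus hplus ⊢
  refine (mul_le_of_le_one_left (prod_nonneg fun k _ ↦ AbsoluteValue.nonneg _ _) hQ).trans
    (prod_le_prod (fun k _ ↦ AbsoluteValue.nonneg _ _) fun k _ ↦ ?_)
  rw [prod_pow, prod_mul_distrib, map_pow, map_mul]
  exact pow_le_pow_left₀ (mul_nonneg (AbsoluteValue.nonneg _ _) (AbsoluteValue.nonneg _ _))
    (mul_le_mul (hminus k) (hplus k) (AbsoluteValue.nonneg _ _) (norm_nonneg _)) m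

end Padic

section NonLiouville

variable {p : ℕ} [Fact p.Prime] {d : ℤ_[p]}

lemma IsPAdicNonLiouville.neg (hd : IsPAdicNonLiouville d) : IsPAdicNonLiouville (-d) := by
  intro δ hδ
  obtain ⟨C, hC, hd⟩ := hd δ hδ
  refine ⟨C, hC, fun s hs ↦ ?_⟩
  have hflip : ((-d : ℤ_[p]) : ℚ_[p]) + s = -((d : ℚ_[p]) + ((-s : ℤ) : ℚ_[p])) := by
    push_cast
    ring
  rw [hflip] at hs ⊢
  simpa only [norm_neg, Int.natAbs_neg] using hd (-s) (neg_ne_zero.1 hs)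

lemma ne_intCast_of_eq_zero_or (hd : d = 0 ∨ ∀ i : ℤ, (d : ℚ_[p]) ≠ i) (i : ℤ) (hi : i ≠ 0) :
    (d : ℚ_[p]) ≠ i := by
  rcases hd with rfl | hd
  · rw [PadicInt.coe_zero]
    exact (Int.cast_ne_zero.2 hi).symm
  · exact hd i

lemma IsPAdicNonLiouville.isSubexponential_norm_invBinom (hd : IsPAdicNonLiouville d)
    (hint : ∀ i : ℤ, i ≠ 0 → (d : ℚ_[p]) ≠ i) :
    IsSubexponential fun l ↦ ‖invBinom (d : ℚ_[p]) l‖ := by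
  intro δ hδ
  obtain ⟨C, hC, hd⟩ := hd δ hδ
  refine ⟨max C 1, by positivity, fun l ↦ ?_⟩
  have hne : ∀ j ∈ Icc 1 l, (j : ℚ_[p]) + d ≠ 0 := fun j hj h ↦
    hint (-j) (by have := (mem_Icc.1 hj).1; omega) (by push_cast; linear_combination h)
  rw [abs_norm]
  refine norm_invBinom_le (one_le_mul_of_one_le_of_one_le (le_max_right _ _)
    (one_le_pow₀ hδ.le)) _ l hne fun j hj ↦ ?_
  have hdj : ‖(j : ℚ_[p]) + d‖⁻¹ ≤ C * δ ^ j := by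
    simpa [add_comm] using hd j (by simpa [add_comm] using hne j hj)
  refine hdj.trans ?_
  gcongr
  · exact le_max_left _ _
  · exact hδ.le
  · exact (mem_Icc.1 hj).2

end NonLiouville

lemma exists_le_pow_le_mul_add_one {p : ℕ} (hp : 1 < p) (l : ℕ) :
    ∃ N, l ≤ p ^ N ∧ p ^ N ≤ p * (l + 1) := by
  refine ⟨Nat.log p l + 1, (Nat.lt_pow_succ_log_self hp l).le, ?_⟩
  rw [pow_succ']
  exact Nat.mul_le_mul_left p (Nat.pow_log_le_add_one p l)

lemma norm_coeff_claim3Poly_le (p : ℕ) [Fact p.Prime] (m n₀ : ℕ) (hn₀ : 0 < n₀) (ξ' : ℤ_[p])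
    (ξ : Fin n₀ → ℤ_[p]) (Q : ℤ_[p][X]) (j' : ℤ) (l α : ℕ) :
    ‖(claim3Poly p m n₀ hn₀ ξ' ξ Q j' l).coeff α‖ ≤
      (p * ((l : ℝ) + 1)) ^ α *
        ∏ k, (‖invBinom ((-(ξ ⟨0, hn₀⟩ - ξ k) : ℤ_[p]) : ℚ_[p]) l‖ *
          ‖invBinom ((ξ ⟨0, hn₀⟩ - ξ k : ℤ_[p]) : ℚ_[p]) l‖) ^ m := by
  obtain ⟨N, hlN, hNl⟩ := exists_le_pow_le_mul_add_one (Fact.out : p.Prime).one_lt l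
  have hp : (0 : ℝ) < p := mod_cast (Fact.out : p.Prime).pos
  have hcoeff := (norm_coeff_mul_pow_le_gaussAbs (zpow_neg_pos p N) _ α).trans
    (gaussAbs_claim3Poly_le hlN m n₀ hn₀ ξ' ξ Q j')
  rw [zpow_neg, zpow_natCast, inv_pow, ← div_eq_mul_inv, div_le_iff₀' (by positivity)] at hcoeff
  refine hcoeff.trans ?_
  gcongr
  exact_mod_cast hNl

theorem stmt6_general (p : ℕ) [Fact p.Prime] (m n₀ : ℕ) (hn₀ : 0 < n₀) (ξ : Fin n₀ → ℤ_[p])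
    (hNL : ∀ k, IsPAdicNonLiouville (ξ ⟨0, hn₀⟩ - ξ k))
    (hNI : ∀ k, ∀ i : ℤ, i ≠ 0 → ((ξ ⟨0, hn₀⟩ - ξ k : ℤ_[p]) : ℚ_[p]) ≠ i)
    (a : ℕ) (δ : ℝ) (hδ : 1 < δ) :
    ∃ C : ℝ, 0 < C ∧ ∀ α ≤ a, ∀ (ξ' : ℤ_[p]) (Q : ℤ_[p][X]) (j' : ℤ) (l : ℕ),
      ‖(claim3Poly p m n₀ hn₀ ξ' ξ Q j' l).coeff α‖ ≤ C * δ ^ l := by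
  have hNI' (k : Fin n₀) (i : ℤ) (hi : i ≠ 0) :
      ((-(ξ ⟨0, hn₀⟩ - ξ k) : ℤ_[p]) : ℚ_[p]) ≠ i := by
    rw [PadicInt.coe_neg, ne_eq, neg_eq_iff_eq_neg, ← Int.cast_neg]
    exact hNI k (-i) (neg_ne_zero.2 hi)
  have hgrowth := (((IsSubexponential.const p).mul .natCast_add_one).pow a).mul
    (.prod univ fun k _ ↦ (((hNL k).neg.isSubexponential_norm_invBinom (hNI' k)).mul
      ((hNL k).isSubexponential_norm_invBinom (hNI k))).pow m)
  obtain ⟨C, hC, hbound⟩ := hgrowth δ hδ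
  refine ⟨C, hC, fun α hα ξ' Q j' l ↦ ?_⟩
  have hone : 1 ≤ (p : ℝ) * (l + 1) := by
    exact_mod_cast Nat.mul_pos (Fact.out : p.Prime).pos l.succ_pos
  refine (norm_coeff_claim3Poly_le p m n₀ hn₀ ξ' ξ Q j' l α).trans
    (le_trans ?_ ((le_abs_self _).trans (hbound l)))
  exact mul_le_mul_of_nonneg_right (pow_le_pow_right₀ hone hα) (by positivity)

/-- **Claim 3 in the proof of Lemma 3.4.1.**
With `ξ', ξ_1, …, ξ_{n₀} ∈ ℤ_p` such that the differences `ξ_1 - ξ_k` and `ξ_k - ξ'`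
are `p`-adically non-Liouville and each either `0` or not a rational integer, and
`Q ∈ ℤ_p[x]`, there is `A > 0` such that for every `δ > 1` there is `C > 0` with
`|c_α^{j',l}| ≤ C δ^{A|j'|}` for all `α ≤ m-1`, `l ∈ ℕ` and `j' ∈ ℤ` with `|j'| > l`,
where `c_α^{j',l}` is the coefficient of `x^α` in the polynomial `claim3Poly`. -/
theorem stmt6 (p : ℕ) [Fact p.Prime] (m n₀ : ℕ) (hm : 1 ≤ m) (hn₀ : 0 < n₀)
    (ξ' : ℤ_[p]) (ξ : Fin n₀ → ℤ_[p])
    (hNL₁ : ∀ k, IsPAdicNonLiouville (ξ ⟨0, hn₀⟩ - ξ k))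
    (hNL₂ : ∀ k, IsPAdicNonLiouville (ξ k - ξ'))
    (hNI₁ : ∀ k, ξ ⟨0, hn₀⟩ - ξ k = 0 ∨
      ∀ i : ℤ, ((ξ ⟨0, hn₀⟩ - ξ k : ℤ_[p]) : ℚ_[p]) ≠ (i : ℚ_[p]))
    (hNI₂ : ∀ k, ξ k - ξ' = 0 ∨ ∀ i : ℤ, ((ξ k - ξ' : ℤ_[p]) : ℚ_[p]) ≠ (i : ℚ_[p]))
    (Q : Polynomial ℤ_[p]) :
    ∃ A : ℝ, 0 < A ∧ ∀ δ : ℝ, 1 < δ → ∃ C : ℝ, 0 < C ∧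
      ∀ α : ℕ, α ≤ m - 1 → ∀ l : ℕ, ∀ j' : ℤ, (l : ℤ) < |j'| →
        ‖(claim3Poly p m n₀ hn₀ ξ' ξ Q j' l).coeff α‖ ≤ C * δ ^ (A * (j'.natAbs : ℝ)) := by
  refine ⟨1, one_pos, fun δ hδ ↦ ?_⟩
  obtain ⟨C, hC, hbound⟩ := stmt6_general p m n₀ hn₀ ξ hNL₁
    (fun k ↦ ne_intCast_of_eq_zero_or (hNI₁ k)) (m - 1) δ hδ
  refine ⟨C, hC, fun α hα l j' hl ↦ (hbound α hα ξ' Q j' l).trans ?_⟩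
  rw [one_mul, Real.rpow_natCast]
  rw [Int.abs_eq_natAbs, Nat.cast_lt] at hl
  gcongr
  exact hδ.le
end

section
/- Let p be a prime and let V be a normed ℚ_p-vector space. Let α ∈ ℤ_p be p-adically non-Liouville with α + i ≠ 0 for every integer i. Let 0 < b < c be real numbers and let (a_i)_{i∈ℤ} be a family of elements of V such that for every r ∈ (b,c) one has ‖a_i‖·r^i → 0 as |i| → ∞. Then for every r ∈ (b,c) one also has ‖a_i‖·|i + α|_p^{−1}·r^i → 0 as |i| → ∞; consequently, the family ((i+α)^{−1}·a_i)_{i∈ℤ} satisfies the same convergence condition as (a_i)_{i∈ℤ}, and the map (a_i)_i ↦ ((i+α)·a_i)_i is a bijection of the space of families satisfying this condition. -/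
open Filter

/-- A family `(a_i)_{i ∈ ℤ}` in a normed space decays on the open annulus of radii
`(b, c)`: for every `r ∈ (b, c)`, `‖a_i‖ r^i → 0` as `|i| → ∞`. -/
def AnnulusDecay {V : Type*} [NormedAddCommGroup V] (b c : ℝ) (a : ℤ → V) : Prop :=
  ∀ r : ℝ, b < r → r < c →
    Filter.Tendsto (fun i : ℤ => ‖a i‖ * r ^ i) Filter.cofinite (nhds 0)

/-!
The idea is to trade subexponential growth of the multipliers for a small change of radius. If
`u i = O(δ ^ |i|)` for every `δ > 1`, then, since `δ ^ |i| ≤ δ ^ i + δ ^ (-i)`, the quantity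
`‖u i • a i‖ * r ^ i` is bounded up to a constant by the terms of the decaying families at the two
radii `r * δ` and `r / δ`, which still lie in the open interval `(b, c)` when `δ` is close to `1`.
The non-Liouville condition says exactly that the multipliers `(i + α)⁻¹` grow subexponentially.
-/

open Asymptotics Topology

/-- A family indexed by `ℤ` has subexponential growth if it is `O(δ ^ |i|)` as `|i| → ∞` for every
`δ > 1`. This is the property of a sequence of scalars that makes termwise multiplication by it
preserve decay on annuli. Growth is measured along `cofinite`, so finitely many terms play no
role. -/
def HasSubexponentialGrowth {E : Type*} [Norm E] (u : ℤ → E) : Prop :=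
  ∀ δ : ℝ, 1 < δ → u =O[cofinite] fun i : ℤ => δ ^ i.natAbs

theorem pow_natAbs_le_zpow_add_zpow_neg {K : Type*} [Field K] [LinearOrder K]
    [IsStrictOrderedRing K] {x : K} (hx : 0 ≤ x) (i : ℤ) : x ^ i.natAbs ≤ x ^ i + x ^ (-i) := by
  rw [← zpow_natCast]
  rcases Int.natAbs_eq i with hi | hi
  · rw [← hi]
    exact le_add_of_nonneg_right (zpow_nonneg hx _)
  · rw [← neg_eq_iff_eq_neg.mpr hi]
    exact le_add_of_nonneg_left (zpow_nonneg hx _)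

theorem exists_one_lt_mul_mem_div_mem {K : Type*} [Field K] [LinearOrder K] [IsStrictOrderedRing K]
    [TopologicalSpace K] [OrderTopology K] {s : Set K} {r : K} (hs : s ∈ 𝓝 r) :
    ∃ δ : K, 1 < δ ∧ r * δ ∈ s ∧ r / δ ∈ s := by
  have hmul : ∀ᶠ δ in 𝓝 (1 : K), r * δ ∈ s :=
    (continuous_const_mul r).tendsto' 1 r (mul_one r) hs
  have hdiv : ∀ᶠ δ in 𝓝 (1 : K), r / δ ∈ s :=
    (continuousAt_const.div continuousAt_id one_ne_zero).eventually_mem (by simpa using hs)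
  have hone : ∀ᶠ δ in 𝓝[>] (1 : K), 1 < δ := eventually_mem_nhdsWithin
  exact (hone.and (nhdsWithin_le_nhds (hmul.and hdiv))).exists

theorem norm_pow_natAbs_mul_zpow_le {δ : ℝ} (hδ : 0 ≤ δ) (x r : ℝ) (i : ℤ) :
    ‖δ ^ i.natAbs * (x * r ^ i)‖ ≤ ‖x * (r * δ) ^ i‖ + ‖x * (r / δ) ^ i‖ :=
  calc
    ‖δ ^ i.natAbs * (x * r ^ i)‖ = δ ^ i.natAbs * ‖x * r ^ i‖ := by
      rw [norm_mul, Real.norm_of_nonneg (pow_nonneg hδ _)]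
    _ ≤ (δ ^ i + δ ^ (-i)) * ‖x * r ^ i‖ := by
      gcongr
      exact pow_natAbs_le_zpow_add_zpow_neg hδ i
    _ = ‖x * (r * δ) ^ i‖ + ‖x * (r / δ) ^ i‖ := by
      simp only [mul_zpow, div_zpow, zpow_neg, norm_mul, norm_div,
        Real.norm_of_nonneg (zpow_nonneg hδ i)]
      ring

theorem AnnulusDecay.smul {𝕜 V : Type*} [SeminormedRing 𝕜] [NormedAddCommGroup V] [Module 𝕜 V]
    [IsBoundedSMul 𝕜 V] {b c : ℝ} {u : ℤ → 𝕜} {a : ℤ → V} (hu : HasSubexponentialGrowth u)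
    (ha : AnnulusDecay b c a) : AnnulusDecay b c fun i => u i • a i := by
  intro r hbr hrc
  obtain ⟨δ, hδ, ⟨hb₁, hc₁⟩, ⟨hb₂, hc₂⟩⟩ := exists_one_lt_mul_mem_div_mem (Ioo_mem_nhds hbr hrc)
  have hsum : Tendsto (fun i => ‖‖a i‖ * (r * δ) ^ i‖ + ‖‖a i‖ * (r / δ) ^ i‖) cofinite (𝓝 0) := by
    simpa using (ha (r * δ) hb₁ hc₁).norm.add (ha (r / δ) hb₂ hc₂).norm
  refine IsBigO.trans_tendsto ?_ hsum
  calc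
    (fun i => ‖u i • a i‖ * r ^ i) =O[cofinite] fun i => ‖u i‖ * (‖a i‖ * r ^ i) := by
      refine isBigO_of_le _ fun i => ?_
      rw [← mul_assoc, norm_mul, norm_mul (‖u i‖ * ‖a i‖)]
      gcongr
      simpa only [norm_mul, norm_norm] using norm_smul_le (u i) (a i)
    _ =O[cofinite] fun i => δ ^ i.natAbs * (‖a i‖ * r ^ i) :=
      (hu δ hδ).norm_left.mul (isBigO_refl _ _)
    _ =O[cofinite] fun i => ‖‖a i‖ * (r * δ) ^ i‖ + ‖‖a i‖ * (r / δ) ^ i‖ :=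
      .of_norm_le fun i => norm_pow_natAbs_mul_zpow_le (zero_le_one.trans hδ.le) _ _ _

theorem IsPAdicNonLiouville.hasSubexponentialGrowth_inv {p : ℕ} [Fact p.Prime] {α : ℤ_[p]}
    (hα : IsPAdicNonLiouville α) :
    HasSubexponentialGrowth fun i : ℤ => ((i : ℚ_[p]) + (α : ℚ_[p]))⁻¹ := by
  intro δ hδ
  obtain ⟨C, hC, hbound⟩ := hα δ hδ
  have hδ₀ : 0 ≤ δ := zero_le_one.trans hδ.le
  refine isBigO_of_le' (c := C) _ fun i => ?_
  rw [norm_inv, Real.norm_of_nonneg (pow_nonneg hδ₀ _), add_comm]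
  by_cases hi : (α : ℚ_[p]) + (i : ℚ_[p]) = 0
  · rw [hi, norm_zero, inv_zero]
    positivity
  · exact hbound i hi

section NormedDivisionRing

variable {𝕜 V : Type*} [NormedDivisionRing 𝕜] [NormedAddCommGroup V] [Module 𝕜 V]
  [NormSMulClass 𝕜 V] {b c : ℝ} {u : ℤ → 𝕜}

theorem AnnulusDecay.existsUnique_smul_eq (hu : HasSubexponentialGrowth fun i => (u i)⁻¹)
    (hne : ∀ i, u i ≠ 0) {g : ℤ → V} (hg : AnnulusDecay b c g) :
    ∃! f : ℤ → V, AnnulusDecay b c f ∧ ∀ i, u i • f i = g i :=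
  ⟨fun i => (u i)⁻¹ • g i, ⟨hg.smul hu, fun i => smul_inv_smul₀ (hne i) _⟩,
    fun _ hf => funext fun i => (eq_inv_smul_iff₀ (hne i)).mpr (hf.2 i)⟩

theorem stmt9_general (hu : HasSubexponentialGrowth fun i => (u i)⁻¹) (hne : ∀ i, u i ≠ 0)
    {a : ℤ → V} (ha : AnnulusDecay b c a) :
    (∀ r : ℝ, b < r → r < c →
      Tendsto (fun i => ‖a i‖ * ‖u i‖⁻¹ * r ^ i) cofinite (𝓝 0)) ∧
    AnnulusDecay b c (fun i => (u i)⁻¹ • a i) ∧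
    (∀ g : ℤ → V, AnnulusDecay b c g →
      ∃! f : ℤ → V, AnnulusDecay b c f ∧ ∀ i, u i • f i = g i) := by
  have hinv : AnnulusDecay b c fun i => (u i)⁻¹ • a i := ha.smul hu
  refine ⟨fun r hbr hrc => ?_, hinv, fun g hg => hg.existsUnique_smul_eq hu hne⟩
  simpa only [norm_smul, norm_inv, mul_comm ‖a _‖] using hinv r hbr hrc

end NormedDivisionRing

/-- **Key convergence claim in the proof of Proposition 3.3.2.**
Let `α ∈ ℤ_p` be `p`-adically non-Liouville with `i + α ≠ 0` for every integer `i`, and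
let `(a_i)_{i∈ℤ}` be a family in a normed `ℚ_p`-vector space `V` with `‖a_i‖ r^i → 0`
(as `|i| → ∞`) for every `r ∈ (b, c)`, where `0 < b < c`.  Then
`‖a_i‖ ‖i + α‖⁻¹ r^i → 0` for every `r ∈ (b, c)`; consequently the family
`((i+α)⁻¹ a_i)_i` satisfies the same decay condition, and
`(f_i)_i ↦ ((i+α) f_i)_i` is a bijection of the space of such families. -/
theorem stmt9 (p : ℕ) [Fact p.Prime] (V : Type*) [NormedAddCommGroup V]
    [NormedSpace ℚ_[p] V]
    (α : ℤ_[p]) (hNL : IsPAdicNonLiouville α)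
    (hne : ∀ i : ℤ, ((i : ℚ_[p]) + (α : ℚ_[p])) ≠ 0)
    (b c : ℝ) (hb : 0 < b) (hbc : b < c)
    (a : ℤ → V) (ha : AnnulusDecay b c a) :
    (∀ r : ℝ, b < r → r < c →
      Filter.Tendsto (fun i : ℤ => ‖a i‖ * ‖(i : ℚ_[p]) + (α : ℚ_[p])‖⁻¹ * r ^ i)
        Filter.cofinite (nhds 0)) ∧
    AnnulusDecay b c (fun i : ℤ => ((i : ℚ_[p]) + (α : ℚ_[p]))⁻¹ • a i) ∧
    (∀ g : ℤ → V, AnnulusDecay b c g →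
      ∃! f : ℤ → V, AnnulusDecay b c f ∧
        ∀ i : ℤ, ((i : ℚ_[p]) + (α : ℚ_[p])) • f i = g i) :=
  stmt9_general hNL.hasSubexponentialGrowth_inv hne ha
end

section
/- Let p be a prime and let V be a ℚ_p-vector space equipped with a nonarchimedean norm ‖·‖ (so ‖x + y‖ ≤ max(‖x‖,‖y‖)). Let σ_1, …, σ_N ∈ ℤ_p be p-adically non-Liouville, each either 0 or not a rational integer, let m ≥ 1 be an integer and C > 1 a real number. Suppose (v_l)_{l≥0} is a sequence in V satisfying, for every l ≥ 1, ‖v_l − v_{l−1}‖ ≤ C · ( ∏_{k=1}^N |l − σ_k|_p^{−1} · |l + σ_k|_p^{−1} )^m · ‖v_{l−1}‖. Then there exists ρ > 0 such that ρ^l·‖v_l − v_{l−1}‖ → 0 as l → ∞. -/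
open Filter

/-!
Expanding `v l` through the recurrence, it suffices that the products `∏ l < n, max 1 |A l|` grow at
most exponentially, where `A l` is the factor in front of `‖v l‖`.  Sequences with this property
form a multiplicative monoid, so it is enough to treat a single factor `‖l - a‖⁻¹`, where `a` is
`σ_k` or `-σ_k`.  If `i` is the integer closest to `a` among `1, …, n`, the ultrametric inequality
gives `‖j - i‖ ≤ ‖j - a‖` for the other `j`, and the product of the `‖j - i‖` is the norm of
`(i - 1)! (n - i)!`, which is at least `p ^ (-n)`.  Only the factor at `i` involves the diophantine
nature of `a`.
-/

open Finset
open scoped Nat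

/-- The multiplicative monoid of real sequences `f` for which the partial products of
`max 1 |f i|` grow at most exponentially.  Truncating at `1` makes the condition monotone in `|f|`,
and since the empty product is `1`, a bound `K * B ^ n` can always be rewritten as `B ^ n`. -/
def expBoundedProd : Submonoid (ℕ → ℝ) where
  carrier := {f | ∃ B : ℝ, ∀ n, ∏ i ∈ range n, max 1 |f i| ≤ B ^ n}
  one_mem' := ⟨1, by simp⟩
  mul_mem' := by
    rintro f g ⟨B, hf⟩ ⟨B', hg⟩
    refine ⟨B * B', fun n => ?_⟩
    have max_mul_le (i : ℕ) : max 1 |(f * g) i| ≤ max 1 |f i| * max 1 |g i| := by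
      rw [Pi.mul_apply, abs_mul]
      exact max_le (one_le_mul_of_one_le_of_one_le (le_max_left _ _) (le_max_left _ _))
        (by gcongr <;> exact le_max_right _ _)
    calc ∏ i ∈ range n, max 1 |(f * g) i|
        ≤ (∏ i ∈ range n, max 1 |f i|) * ∏ i ∈ range n, max 1 |g i| := by
          rw [← prod_mul_distrib]
          exact prod_le_prod (fun i _ => by positivity) fun i _ => max_mul_le i
      _ ≤ B ^ n * B' ^ n :=
          mul_le_mul (hf n) (hg n) (by positivity) ((by positivity : (0 : ℝ) ≤ _).trans (hf n))
      _ = (B * B') ^ n := (mul_pow B B' n).symm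

lemma const_mem_expBoundedProd (c : ℝ) : (fun _ => c) ∈ expBoundedProd :=
  ⟨max 1 |c|, by simp⟩

section Recurrence

variable {V : Type*} [SeminormedAddCommGroup V] {v : ℕ → V} {A : ℕ → ℝ}

lemma norm_le_norm_zero_mul_prod (hv : ∀ l, ‖v (l + 1) - v l‖ ≤ A l * ‖v l‖) (n : ℕ) :
    ‖v n‖ ≤ ‖v 0‖ * ∏ i ∈ range n, (1 + |A i|) := by
  have norm_succ_le (l : ℕ) : ‖v (l + 1)‖ ≤ (1 + |A l|) * ‖v l‖ + 0 :=
    calc ‖v (l + 1)‖ ≤ ‖v l‖ + ‖v (l + 1) - v l‖ := norm_le_norm_add_norm_sub' _ _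
      _ ≤ ‖v l‖ + |A l| * ‖v l‖ := by grw [hv l, le_abs_self (A l)]
      _ = (1 + |A l|) * ‖v l‖ + 0 := by ring
  simpa using discrete_gronwall_prod_general (u := fun l => ‖v l‖) (b := fun _ => 0) (n₀ := 0)
    (fun l _ => norm_succ_le l) (fun l _ => by positivity) n.zero_le

lemma norm_sub_le_norm_zero_mul_prod (hv : ∀ l, ‖v (l + 1) - v l‖ ≤ A l * ‖v l‖) (l : ℕ) :
    ‖v (l + 1) - v l‖ ≤ ‖v 0‖ * ∏ i ∈ range (l + 1), (1 + |A i|) :=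
  calc ‖v (l + 1) - v l‖ ≤ A l * ‖v l‖ := hv l
    _ ≤ (1 + |A l|) * (‖v 0‖ * ∏ i ∈ range l, (1 + |A i|)) := by
        gcongr
        · linarith [le_abs_self (A l)]
        · exact norm_le_norm_zero_mul_prod hv l
    _ = ‖v 0‖ * ∏ i ∈ range (l + 1), (1 + |A i|) := by rw [prod_range_succ]; ring

lemma exists_tendsto_pow_mul_norm_sub (hA : A ∈ expBoundedProd)
    (hv : ∀ l, ‖v (l + 1) - v l‖ ≤ A l * ‖v l‖) :
    ∃ ρ : ℝ, 0 < ρ ∧ Tendsto (fun l => ρ ^ (l + 1) * ‖v (l + 1) - v l‖) atTop (nhds 0) := by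
  obtain ⟨B, hB⟩ := hA
  have B_pos : 0 < B := by
    have : max 1 |A 0| ≤ B := by simpa using hB 1
    exact lt_of_lt_of_le (by positivity) this
  have prod_le (n : ℕ) : ∏ i ∈ range n, (1 + |A i|) ≤ (2 * B) ^ n :=
    calc ∏ i ∈ range n, (1 + |A i|) ≤ ∏ i ∈ range n, 2 * max 1 |A i| :=
          prod_le_prod (fun i _ => by positivity) fun i _ => by
            linarith [le_max_left 1 |A i|, le_max_right 1 |A i|]
      _ = 2 ^ n * ∏ i ∈ range n, max 1 |A i| := by rw [prod_mul_distrib, prod_const, card_range]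
      _ ≤ (2 * B) ^ n := by grw [hB n, mul_pow]
  refine ⟨(4 * B)⁻¹, by positivity, ?_⟩
  have lim : Tendsto (fun l : ℕ => ‖v 0‖ * (1 / 2 : ℝ) ^ (l + 1)) atTop (nhds 0) := by
    simpa using ((tendsto_add_atTop_iff_nat 1).2 (tendsto_pow_atTop_nhds_zero_of_lt_one
      one_half_pos.le one_half_lt_one)).const_mul ‖v 0‖
  refine squeeze_zero (fun l => by positivity) (fun l => ?_) lim
  calc (4 * B)⁻¹ ^ (l + 1) * ‖v (l + 1) - v l‖
      ≤ (4 * B)⁻¹ ^ (l + 1) * (‖v 0‖ * (2 * B) ^ (l + 1)) := by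
        grw [norm_sub_le_norm_zero_mul_prod hv l, prod_le]
    _ = ‖v 0‖ * ((4 * B)⁻¹ * (2 * B)) ^ (l + 1) := by rw [mul_pow _ (2 * B)]; ring
    _ = ‖v 0‖ * (1 / 2) ^ (l + 1) := by
        rw [show (4 * B)⁻¹ * (2 * B) = 1 / 2 by field_simp; norm_num]

end Recurrence

lemma prod_erase_range_natCast_sub {R : Type*} [CommRing R] (i r : ℕ) :
    ∏ j ∈ (range (i + r + 1)).erase i, ((i : R) - j) = (-1) ^ r * (i ! * r !) := by
  induction r with
  | zero =>
    have erase_eq : (range (i + 1)).erase i = range i := by simp [range_add_one]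
    simp [erase_eq, prod_range_natCast_sub, ← Nat.descFactorial_eq_prod_range,
      Nat.descFactorial_self]
  | succ r ih =>
    rw [← add_assoc, range_add_one, erase_insert_of_ne (by omega), prod_insert (by simp), ih,
      Nat.factorial_succ]
    push_cast
    ring

lemma exists_mem_forall_dist_le {X ι : Type*} [PseudoMetricSpace X] [IsUltrametricDist X]
    {s : Finset ι} (hs : s.Nonempty) (x : ι → X) (a : X) :
    ∃ i ∈ s, ∀ j ∈ s, dist (x i) (x j) ≤ dist (x j) a := by
  obtain ⟨i, hi, closest⟩ := exists_min_image s (fun j => dist (x j) a) hs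
  refine ⟨i, hi, fun j hj => ?_⟩
  calc dist (x i) (x j) ≤ max (dist (x i) a) (dist a (x j)) := dist_triangle_max _ _ _
    _ ≤ dist (x j) a := max_le (closest j hj) (dist_comm a (x j)).le

section Padic

variable {p : ℕ} [Fact p.Prime]

lemma norm_factorial_inv_le (n : ℕ) : ‖(n ! : ℚ_[p])‖⁻¹ ≤ (p : ℝ) ^ n := by
  have hfact : (n ! : ℚ_[p]) ≠ 0 := mod_cast n.factorial_ne_zero
  rw [Padic.norm_eq_zpow_neg_valuation hfact, Padic.valuation_natCast, zpow_neg, inv_inv,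
    zpow_natCast]
  exact pow_le_pow_right₀ (mod_cast (Fact.out : p.Prime).one_le) (padicValNat_factorial_le p n)

lemma prod_erase_range_norm_natCast_sub_inv_le {i n : ℕ} (hi : i ≤ n) :
    ∏ j ∈ (range (n + 1)).erase i, ‖(i : ℚ_[p]) - j‖⁻¹ ≤ (p : ℝ) ^ n := by
  obtain ⟨r, rfl⟩ := Nat.exists_eq_add_of_le hi
  rw [prod_inv_distrib, ← norm_prod, prod_erase_range_natCast_sub, norm_mul, norm_pow,
    norm_neg, norm_one, one_pow, one_mul, norm_mul, mul_inv, pow_add]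
  exact mul_le_mul (norm_factorial_inv_le i) (norm_factorial_inv_le r) (by positivity)
    (by positivity)

lemma exists_prod_max_one_norm_inv_le (a : ℚ_[p]) (n : ℕ) :
    ∃ i ≤ n, ∏ j ∈ range (n + 1), max 1 ‖((j + 1 : ℕ) : ℚ_[p]) - a‖⁻¹ ≤
      max 1 ‖((i + 1 : ℕ) : ℚ_[p]) - a‖⁻¹ * (p : ℝ) ^ n := by
  obtain ⟨i, hi, dist_le⟩ :=
    exists_mem_forall_dist_le (nonempty_range_add_one (n := n)) (fun j => ((j + 1 : ℕ) : ℚ_[p])) a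
  have i_le : i ≤ n := mem_range_succ_iff.1 hi
  refine ⟨i, i_le, ?_⟩
  rw [← mul_prod_erase _ _ hi]
  gcongr
  refine le_trans (prod_le_prod (fun j _ => by positivity) fun j hj => ?_)
    (prod_erase_range_norm_natCast_sub_inv_le i_le)
  obtain ⟨hji, hj⟩ := mem_erase.1 hj
  have norm_sub_pos : 0 < ‖(i : ℚ_[p]) - j‖ := norm_pos_iff.2 (sub_ne_zero.2 (mod_cast hji.symm))
  have norm_sub_le_one : ‖(i : ℚ_[p]) - j‖ ≤ 1 := mod_cast Padic.norm_int_le_one (p := p) (i - j)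
  have norm_sub_le : ‖(i : ℚ_[p]) - j‖ ≤ ‖((j + 1 : ℕ) : ℚ_[p]) - a‖ := by
    simpa [dist_eq_norm] using dist_le j hj
  exact max_le ((one_le_inv₀ norm_sub_pos).2 norm_sub_le_one) (inv_anti₀ norm_sub_pos norm_sub_le)

/-- `a : ℚ_[p]` is exponentially separated from the nonzero integers: its distance to `s ≠ 0` is at
least `r ^ |s|` for some `r > 0`.  Away from the nonzero integers this says that `a` and `-a` have
positive `p`-adic type.  Asking for `r ≤ 1` and omitting a multiplicative constant lose nothing,
because `|s| ≥ 1`. -/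
def IsExpSeparated (a : ℚ_[p]) : Prop :=
  ∃ r ∈ Set.Ioc (0 : ℝ) 1, ∀ s : ℤ, s ≠ 0 → r ^ s.natAbs ≤ ‖(s : ℚ_[p]) - a‖

namespace IsExpSeparated

variable {a : ℚ_[p]}

lemma neg (ha : IsExpSeparated a) : IsExpSeparated (-a) := by
  obtain ⟨r, hr, h⟩ := ha
  refine ⟨r, hr, fun s hs => ?_⟩
  have : r ^ s.natAbs ≤ ‖(s : ℚ_[p]) + a‖ := by
    simpa only [Int.natAbs_neg, Int.cast_neg, ← neg_add', norm_neg] using h (-s) (neg_ne_zero.2 hs)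
  rwa [sub_neg_eq_add]

lemma norm_natCast_sub_inv_mem_expBoundedProd (ha : IsExpSeparated a) :
    (fun l : ℕ => ‖((l + 1 : ℕ) : ℚ_[p]) - a‖⁻¹) ∈ expBoundedProd := by
  obtain ⟨r, ⟨r_pos, r_le_one⟩, h⟩ := ha
  have one_le_inv : 1 ≤ r⁻¹ := (one_le_inv₀ r_pos).2 r_le_one
  have one_le_p : (1 : ℝ) ≤ p := mod_cast (Fact.out : p.Prime).one_le
  refine ⟨r⁻¹ * p, fun n => ?_⟩
  simp only [abs_inv, abs_norm]
  rcases n with _ | n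
  · simp
  obtain ⟨i, hi, prod_le⟩ := exists_prod_max_one_norm_inv_le a n
  have inv_le : ‖((i + 1 : ℕ) : ℚ_[p]) - a‖⁻¹ ≤ r⁻¹ ^ (i + 1) := by
    rw [inv_pow]
    exact inv_anti₀ (by positivity) (mod_cast h (i + 1 : ℕ) (by omega))
  calc _ ≤ max 1 ‖((i + 1 : ℕ) : ℚ_[p]) - a‖⁻¹ * (p : ℝ) ^ n := prod_le
    _ ≤ r⁻¹ ^ (i + 1) * (p : ℝ) ^ n := by
        gcongr
        exact max_le (one_le_pow₀ one_le_inv) inv_le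
    _ ≤ r⁻¹ ^ (n + 1) * (p : ℝ) ^ (n + 1) := by gcongr; omega
    _ = (r⁻¹ * p) ^ (n + 1) := (mul_pow _ _ _).symm

end IsExpSeparated

lemma IsPAdicNonLiouville.isExpSeparated {a : ℤ_[p]} (ha : IsPAdicNonLiouville a)
    (hne : ∀ s : ℤ, s ≠ 0 → (a : ℚ_[p]) ≠ s) : IsExpSeparated (a : ℚ_[p]) := by
  obtain ⟨C, -, h⟩ := ha 2 one_lt_two
  have one_le : 1 ≤ max 1 C * 2 := by linarith [le_max_left 1 C]
  refine ⟨(max 1 C * 2)⁻¹, ⟨by positivity, inv_le_one_of_one_le₀ one_le⟩, fun s hs => ?_⟩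
  have hsub : (a : ℚ_[p]) - s ≠ 0 := sub_ne_zero.2 (hne s hs)
  have norm_inv_le : ‖(s : ℚ_[p]) - a‖⁻¹ ≤ C * 2 ^ s.natAbs := by
    simpa [← sub_eq_add_neg, norm_sub_rev] using h (-s) (by simpa [← sub_eq_add_neg] using hsub)
  rw [inv_pow]
  refine inv_le_of_inv_le₀ (norm_pos_iff.2 (sub_ne_zero.2 (hne s hs).symm)) ?_
  calc ‖(s : ℚ_[p]) - a‖⁻¹ ≤ C * 2 ^ s.natAbs := norm_inv_le
    _ ≤ max 1 C ^ s.natAbs * 2 ^ s.natAbs := by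
        gcongr
        exact (le_max_right 1 C).trans
          (le_self_pow₀ (le_max_left 1 C) (Int.natAbs_ne_zero.2 hs))
    _ = (max 1 C * 2) ^ s.natAbs := (mul_pow _ _ _).symm

theorem stmt10_general {V ι : Type*} [SeminormedAddCommGroup V] [Fintype ι] {σ : ι → ℚ_[p]}
    (hσ : ∀ k, IsExpSeparated (σ k)) (m : ℕ) (C : ℝ) {v : ℕ → V}
    (hv : ∀ l : ℕ, ‖v (l + 1) - v l‖ ≤
      C * (∏ k, ‖((l + 1 : ℕ) : ℚ_[p]) - σ k‖⁻¹ * ‖((l + 1 : ℕ) : ℚ_[p]) + σ k‖⁻¹) ^ m * ‖v l‖) :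
    ∃ ρ : ℝ, 0 < ρ ∧ Tendsto (fun l => ρ ^ (l + 1) * ‖v (l + 1) - v l‖) atTop (nhds 0) := by
  have mem_sub (k : ι) := (hσ k).norm_natCast_sub_inv_mem_expBoundedProd
  have mem_add (k : ι) :
      (fun l : ℕ => ‖((l + 1 : ℕ) : ℚ_[p]) + σ k‖⁻¹) ∈ expBoundedProd := by
    simpa only [sub_neg_eq_add] using (hσ k).neg.norm_natCast_sub_inv_mem_expBoundedProd
  have mem_prod := prod_mem (t := univ) fun k _ => mul_mem (mem_sub k) (mem_add k)
  refine exists_tendsto_pow_mul_norm_sub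
    (mul_mem (const_mem_expBoundedProd C) (pow_mem mem_prod m)) fun l => ?_
  simpa only [Pi.mul_apply, Pi.pow_apply, prod_apply] using hv l

end Padic

/-- **Claim 1 in the proof of Proposition 3.5.3.**
Let `V` be a `ℚ_p`-vector space with a nonarchimedean norm, let `σ_1, …, σ_N ∈ ℤ_p` be
`p`-adically non-Liouville, each either `0` or not a rational integer, `m ≥ 1` and
`C > 1`.  If a sequence `(v_l)` in `V` satisfies
`‖v_l - v_{l-1}‖ ≤ C (∏_k ‖l - σ_k‖⁻¹ ‖l + σ_k‖⁻¹)^m ‖v_{l-1}‖` for all `l ≥ 1`,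
then there is `ρ > 0` with `ρ^l ‖v_l - v_{l-1}‖ → 0` as `l → ∞`. -/
theorem stmt10 (p : ℕ) [Fact p.Prime] (V : Type*) [NormedAddCommGroup V]
    [NormedSpace ℚ_[p] V] [IsUltrametricDist V]
    (N : ℕ) (σ : Fin N → ℤ_[p])
    (hNL : ∀ k, IsPAdicNonLiouville (σ k))
    (hNI : ∀ k, σ k = 0 ∨ ∀ i : ℤ, ((σ k : ℚ_[p])) ≠ (i : ℚ_[p]))
    (m : ℕ) (hm : 1 ≤ m) (C : ℝ) (hC : 1 < C)
    (v : ℕ → V)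
    (hv : ∀ l : ℕ,
      ‖v (l + 1) - v l‖ ≤
        C * (∏ k : Fin N,
            ‖((l + 1 : ℕ) : ℚ_[p]) - (σ k : ℚ_[p])‖⁻¹ *
            ‖((l + 1 : ℕ) : ℚ_[p]) + (σ k : ℚ_[p])‖⁻¹) ^ m * ‖v l‖) :
    ∃ ρ : ℝ, 0 < ρ ∧
      Filter.Tendsto (fun l : ℕ => ρ ^ (l + 1) * ‖v (l + 1) - v l‖)
        Filter.atTop (nhds 0) := by
  exact stmt10_general (fun k => (hNL k).isExpSeparated fun s hs h =>
    (hNI k).elim (fun h0 => hs (by simpa [h0, eq_comm] using h)) fun hint => hint s h) m C hv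
end

section
/- Let K be a field of characteristic zero, W a K-vector space, and N : W → W a K-linear map. Let m ≥ 1 and let ξ_1, …, ξ_{n₀} ∈ K satisfy ∏_{k=1}^{n₀} (N − ξ_k)^m = 0 and assume that no difference ξ_k − ξ_{k'} is a nonzero rational integer. Let Q ∈ K[x]. For j ∈ ℤ and l ∈ ℕ define the K-linear map D_l^{(j)} := Q(N + j) ∘ ∏_{k=1}^{n₀} ∏_{i=1}^{l} [ ((i − (ξ_1 − ξ_k))·(i + (ξ_1 − ξ_k)))^{−1} · (i − (N + j − ξ_k)) ∘ (i + (N + j − ξ_k)) ]^m (all scalar denominators (i ± (ξ_1 − ξ_k)) are nonzero, and all factors are polynomials in N, hence commute). Then: (a) D_l^{(j)} = 0 whenever j ≠ 0 and |j| ≤ l; (b) if moreover the image of Q(N) is contained in the kernel of N − ξ_1, then D_l^{(0)} = Q(N) for every l. -/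
open Polynomial

/-- The polynomial over `K` whose evaluation at `N` is the operator
`D_l^{(j)} = Q(N + j) ∘ ∏_{k=1}^{n₀} ∏_{i=1}^{l}
[((i - (ξ_1 - ξ_k))(i + (ξ_1 - ξ_k)))⁻¹ (i - (N + j - ξ_k))(i + (N + j - ξ_k))]^m`
(with `ξ_1 = ξ 0`), from the proof of claim 1 of Lemma 3.4.1. -/
noncomputable def DjlPoly (K : Type*) [Field K] (n₀ : ℕ) (hn₀ : 0 < n₀)
    (ξ : Fin n₀ → K) (m : ℕ) (Q : Polynomial K) (j : ℤ) (l : ℕ) : Polynomial K :=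
  Q.comp (Polynomial.X + Polynomial.C (j : K)) *
    ∏ k : Fin n₀, ∏ i ∈ Finset.Icc 1 l,
      (Polynomial.C ((((i : K) - (ξ ⟨0, hn₀⟩ - ξ k)) *
            ((i : K) + (ξ ⟨0, hn₀⟩ - ξ k)))⁻¹) *
        ((Polynomial.C (i : K) - (Polynomial.X + Polynomial.C ((j : K) - ξ k))) *
          (Polynomial.C (i : K) + (Polynomial.X + Polynomial.C ((j : K) - ξ k))))) ^ m

/-!
Set `x = ξ₁`, and write `D_l^{(j)} = Q(N + j) ∘ P_j(N)`.

For (a), the factor of `P_j` with indices `k` and `i = |j|` is the `m`-th power of a polynomial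
whose value at `ξ_k` is a multiple of `(i - j)(i + j) = 0`; hence `∏ (X - ξ_k)^m` divides `P_j`.

For (b), the scalar denominators are chosen so that `P_0(x) = 1`, and `P_0(N)` acts on the image of
`Q(N)`, which lies in the `x`-eigenspace of `N`, as the scalar `P_0(x)`.
-/

theorem aeval_mul_eq_eval_smul {R A : Type*} [CommRing R] [Ring A] [Algebra R A]
    {a b : A} {x : R} (h : a * b = x • b) (p : R[X]) : aeval a p * b = p.eval x • b := by
  have lmul_apply : Algebra.lmul R A a b = x • b := h
  have aeval_lmul := Module.End.aeval_apply_of_mem_apply_eq_smul (p := p) lmul_apply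
  rwa [aeval_algHom_apply] at aeval_lmul

theorem X_sub_C_dvd_shift_of_sq_eq_sq {R : Type*} [CommRing R] {s t : R} (h : s ^ 2 = t ^ 2)
    (r : R) :
    X - C r ∣ (C s - (X + C (t - r))) * (C s + (X + C (t - r))) := by
  rw [dvd_iff_isRoot, IsRoot.def]
  simp only [eval_mul, eval_sub, eval_add, eval_C, eval_X]
  linear_combination h

section NormalizedShiftProd

variable {K ι : Type*} [Field K] [Fintype ι]

/-- The polynomial `P_j` with `D_l^{(j)} = Q(N + j) ∘ P_j(N)`: the product over `k` and
`1 ≤ i ≤ l` of the factors `(i - (X + j - ξ_k))(i + (X + j - ξ_k))`, raised to the power `m` and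
normalized so that `P_0` takes the value `1` at `x`, as long as no denominator `i ± (x - ξ_k)`
vanishes. The base point `x`, which is `ξ_1` in `D_l^{(j)}`, need not be one of the `ξ_k`. -/
noncomputable def normalizedShiftProd (x : K) (ξ : ι → K) (m : ℕ) (j : ℤ) (l : ℕ) : K[X] :=
  ∏ k, ∏ i ∈ Finset.Icc 1 l,
    (C ((((i : K) - (x - ξ k)) * ((i : K) + (x - ξ k)))⁻¹) *
      ((C (i : K) - (X + C ((j : K) - ξ k))) * (C (i : K) + (X + C ((j : K) - ξ k))))) ^ m

theorem prod_X_sub_C_pow_dvd_normalizedShiftProd (x : K) (ξ : ι → K) (m : ℕ) {j : ℤ} {l : ℕ}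
    (hj : j ≠ 0) (hjl : |j| ≤ l) :
    ∏ k, (X - C (ξ k)) ^ m ∣ normalizedShiftProd x ξ m j l := by
  have natAbs_mem : j.natAbs ∈ Finset.Icc 1 l := by
    rw [Int.abs_eq_natAbs] at hjl
    rw [Finset.mem_Icc]
    omega
  have natAbs_sq : (j.natAbs : K) ^ 2 = (j : K) ^ 2 := by
    exact_mod_cast congrArg (Int.cast : ℤ → K) (Int.natAbs_pow_two j)
  refine Finset.prod_dvd_prod_of_dvd _ _ fun k _ => ?_
  refine dvd_trans ?_ (Finset.dvd_prod_of_mem _ natAbs_mem)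
  exact pow_dvd_pow_of_dvd ((X_sub_C_dvd_shift_of_sq_eq_sq natAbs_sq (ξ k)).mul_left _) m

theorem eval_normalizedShiftProd_zero {x : K} {ξ : ι → K} {l : ℕ}
    (hξ : ∀ k, ∀ i : ℤ, i ≠ 0 → |i| ≤ l → x - ξ k ≠ i) (m : ℕ) :
    (normalizedShiftProd x ξ m 0 l).eval x = 1 := by
  simp only [normalizedShiftProd, eval_prod]
  refine Finset.prod_eq_one fun k _ => Finset.prod_eq_one fun i hi => ?_
  obtain ⟨one_le, le_l⟩ := Finset.mem_Icc.mp hi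
  have denom_sub_ne_zero : (i : K) - (x - ξ k) ≠ 0 := fun h =>
    hξ k i (by omega) (by simpa using le_l) (by push_cast; linear_combination -h)
  have denom_add_ne_zero : (i : K) + (x - ξ k) ≠ 0 := fun h =>
    hξ k (-i) (by omega) (by simpa using le_l) (by push_cast; linear_combination h)
  have shift_zero : x + (((0 : ℤ) : K) - ξ k) = x - ξ k := by
    rw [Int.cast_zero, zero_sub, sub_eq_add_neg]
  simp only [eval_pow, eval_mul, eval_sub, eval_add, eval_C, eval_X, shift_zero]
  rw [inv_mul_cancel₀ (mul_ne_zero denom_sub_ne_zero denom_add_ne_zero), one_pow]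

end NormalizedShiftProd

theorem DjlPoly_eq_comp_mul_normalizedShiftProd {K : Type*} [Field K] {n₀ : ℕ} (hn₀ : 0 < n₀)
    (ξ : Fin n₀ → K) (m : ℕ) (Q : K[X]) (j : ℤ) (l : ℕ) :
    DjlPoly K n₀ hn₀ ξ m Q j l =
      Q.comp (X + C (j : K)) * normalizedShiftProd (ξ ⟨0, hn₀⟩) ξ m j l :=
  rfl

theorem stmt12_general {K A : Type*} [Field K] [Ring A] [Algebra K A] (a : A) (m : ℕ) {n₀ : ℕ}
    (hn₀ : 0 < n₀) (ξ : Fin n₀ → K) (Q : K[X]) (l : ℕ)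
    (hξ : ∀ k, ∀ i : ℤ, i ≠ 0 → |i| ≤ l → ξ ⟨0, hn₀⟩ - ξ k ≠ i) :
    (aeval a (∏ k, (X - C (ξ k)) ^ m) = 0 →
      ∀ j : ℤ, j ≠ 0 → |j| ≤ l → aeval a (DjlPoly K n₀ hn₀ ξ m Q j l) = 0) ∧
    (a * aeval a Q = ξ ⟨0, hn₀⟩ • aeval a Q →
      aeval a (DjlPoly K n₀ hn₀ ξ m Q 0 l) = aeval a Q) := by
  simp only [DjlPoly_eq_comp_mul_normalizedShiftProd]
  constructor
  · intro hann j hj hjl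
    exact aeval_eq_zero_of_dvd_aeval_eq_zero
      ((prod_X_sub_C_pow_dvd_normalizedShiftProd _ ξ m hj hjl).mul_left _) hann
  · intro hQ
    rw [Int.cast_zero, C_0, add_zero, comp_X, mul_comm, map_mul, aeval_mul_eq_eval_smul hQ,
      eval_normalizedShiftProd_zero hξ, one_smul]

/-- **Termwise computation of the operators `D_l` (claim 1 of Lemma 3.4.1).**
Let `K` be a field of characteristic zero, `W` a `K`-vector space and `N` an
endomorphism of `W` with `∏_{k=1}^{n₀} (N - ξ_k)^m = 0`, where no difference
`ξ_k - ξ_{k'}` is a nonzero rational integer.  Then (a) `D_l^{(j)} = 0` whenever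
`j ≠ 0` and `|j| ≤ l`; and (b) if the image of `Q(N)` lies in the kernel of
`N - ξ_1` then `D_l^{(0)} = Q(N)` for every `l`. -/
theorem stmt12 (K : Type*) [Field K] [CharZero K]
    (W : Type*) [AddCommGroup W] [Module K W]
    (N : Module.End K W)
    (m : ℕ) (hm : 1 ≤ m) (n₀ : ℕ) (hn₀ : 0 < n₀) (ξ : Fin n₀ → K)
    (hann : Polynomial.aeval N
      (∏ k : Fin n₀, (Polynomial.X - Polynomial.C (ξ k)) ^ m) = 0)
    (hNID : ∀ k k' : Fin n₀, ∀ i : ℤ, i ≠ 0 → ξ k - ξ k' ≠ (i : K))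
    (Q : Polynomial K) :
    (∀ l : ℕ, ∀ j : ℤ, j ≠ 0 → |j| ≤ (l : ℤ) →
      Polynomial.aeval N (DjlPoly K n₀ hn₀ ξ m Q j l) = 0) ∧
    ((∀ w : W, N (Polynomial.aeval N Q w) = ξ ⟨0, hn₀⟩ • (Polynomial.aeval N Q w)) →
      ∀ l : ℕ, Polynomial.aeval N (DjlPoly K n₀ hn₀ ξ m Q 0 l) =
        Polynomial.aeval N Q) := by
  have general l := stmt12_general N m hn₀ ξ Q l fun k i hi _ => hNID ⟨0, hn₀⟩ k i hi
  exact ⟨fun l => (general l).1 hann, fun hQ l => (general l).2 (LinearMap.ext hQ)⟩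
end
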